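/- Let (b₁,b₂) ∈ B with b₃ = (b₁b₂)^(−1), and assume G^S₊(b₁,b₂,b₃) = G^S₋(b₁,b₂,b₃) > 0 (the irrotational S₂ regime); set N = √(G^S₊(b₁,b₂,b₃)). Then the point p* = (b₁, b₂, 0, 0, 0, N, 0, 0, 0, 0) is an equilibrium of the reduced equations of motion, the set {η_r = 0} is invariant under the reduced flow, and p* is Liapunov stable relative to the set {(b,c,η_l,η_r) : ‖η_l‖ = N, η_r = 0}: for every ε > 0 there is δ > 0 such that every solution γ of the reduced equations defined on [0,T) with γ(0) in this set and ‖γ(0) − p*‖ < δ satisfies ‖γ(t) − p*‖ < ε for all t ∈ [0,T). -/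

import Mathlib

open Real MeasureTheory

/-- `C₁(x,y,z) = 2πg ∫₀^∞ s·((s+x²)(s+y²)(s+z²))^(−3/2) ds`. -/
noncomputable def riC1 (g x y z : ℝ) : ℝ :=
  2 * π * g * ∫ s in Set.Ioi (0:ℝ),
    s * ((s + x ^ 2) * (s + y ^ 2) * (s + z ^ 2)) ^ (-(3:ℝ)/2)

/-- `C₂(x,y,z) = 2πg ∫₀^∞ s²·((s+x²)(s+y²)(s+z²))^(−3/2) ds`. -/
noncomputable def riC2 (g x y z : ℝ) : ℝ :=
  2 * π * g * ∫ s in Set.Ioi (0:ℝ),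
    s ^ 2 * ((s + x ^ 2) * (s + y ^ 2) * (s + z ^ 2)) ^ (-(3:ℝ)/2)

/-- `G^S₊(x,y,z)`. -/
noncomputable def GSp (g x y z : ℝ) : ℝ :=
  ((x - z) ^ 4 / (x * z)) *
    ((x * y ^ 2 * z + (x ^ 2 * y ^ 2 - x ^ 2 * z ^ 2 + y ^ 2 * z ^ 2)) * riC1 g x y z
      + (x * z + y ^ 2) * riC2 g x y z)

/-- `G^S₋(x,y,z)`. -/
noncomputable def GSm (g x y z : ℝ) : ℝ :=
  ((x + z) ^ 4 / (x * z)) *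
    ((x * y ^ 2 * z - (x ^ 2 * y ^ 2 - x ^ 2 * z ^ 2 + y ^ 2 * z ^ 2)) * riC1 g x y z
      + (x * z - y ^ 2) * riC2 g x y z)

/-- `N^S₊(x,y,z) = ½(√G^S₊ + √G^S₋)`. -/
noncomputable def NSp (g x y z : ℝ) : ℝ :=
  (Real.sqrt (GSp g x y z) + Real.sqrt (GSm g x y z)) / 2

/-- `N^S₋(x,y,z) = ½(√G^S₊ − √G^S₋)`. -/
noncomputable def NSm (g x y z : ℝ) : ℝ :=
  (Real.sqrt (GSp g x y z) - Real.sqrt (GSm g x y z)) / 2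

/-- Membership in `B = {(b₁,b₂) : b₁ > b₂ > b₁^(−1/2) > 0}`. -/
def memB (b1 b2 : ℝ) : Prop := b2 < b1 ∧ (Real.sqrt b1)⁻¹ < b2 ∧ 0 < (Real.sqrt b1)⁻¹

/-- The reduced Hamiltonian `H(b₁,b₂,c₁,c₂,m₁,…,m₆)` of the Riemann ellipsoid problem,
as a function on `ℝ¹⁰` (coordinates `p 0 = b₁, p 1 = b₂, p 2 = c₁, p 3 = c₂,
p 4,…,p 9 = m₁,…,m₆`), with `b₃ = (b₁b₂)⁻¹`. -/
noncomputable def Hred (g : ℝ) (p : Fin 10 → ℝ) : ℝ :=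
  let b1 := p 0; let b2 := p 1; let c1 := p 2; let c2 := p 3
  let m1 := p 4; let m2 := p 5; let m3 := p 6
  let m4 := p 7; let m5 := p 8; let m6 := p 9
  let b3 := (b1 * b2)⁻¹
  ((b2 ^ 2 + b3 ^ 2) * b1 ^ 2 * c1 ^ 2 + (b1 ^ 2 + b3 ^ 2) * b2 ^ 2 * c2 ^ 2
        - 2 * b3 * c1 * c2) /
      (2 * (b1 ^ 2 * b2 ^ 2 + b1 ^ 2 * b3 ^ 2 + b2 ^ 2 * b3 ^ 2))
    + ((b1 ^ 2 + b2 ^ 2) * (m3 ^ 2 + m6 ^ 2) + 4 * b1 * b2 * m3 * m6) /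
        (2 * (b1 ^ 2 - b2 ^ 2) ^ 2)
    + ((b1 ^ 2 + b3 ^ 2) * (m2 ^ 2 + m5 ^ 2) + 4 * b1 * b3 * m2 * m5) /
        (2 * (b1 ^ 2 - b3 ^ 2) ^ 2)
    + ((b2 ^ 2 + b3 ^ 2) * (m1 ^ 2 + m4 ^ 2) + 4 * b2 * b3 * m1 * m4) /
        (2 * (b2 ^ 2 - b3 ^ 2) ^ 2)
    - 2 * π * g * ∫ s in Set.Ioi (0:ℝ),
        ((s + b1 ^ 2) * (s + b2 ^ 2) * (s + b3 ^ 2)) ^ (-(1:ℝ)/2)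

/-- Partial derivative `∂H/∂pᵢ`. -/
noncomputable def pd (g : ℝ) (i : Fin 10) (p : Fin 10 → ℝ) : ℝ :=
  fderiv ℝ (Hred g) p (Pi.single i 1)

/-- The reduced vector field: `b' = ∂H/∂c`, `c' = −∂H/∂b`, `η_l' = η_l × ∇_{η_l}H`,
`η_r' = η_r × ∇_{η_r}H`. -/
noncomputable def RVF (g : ℝ) (p : Fin 10 → ℝ) : Fin 10 → ℝ :=
  ![pd g 2 p, pd g 3 p, -pd g 0 p, -pd g 1 p,
    p 5 * pd g 6 p - p 6 * pd g 5 p,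
    p 6 * pd g 4 p - p 4 * pd g 6 p,
    p 4 * pd g 5 p - p 5 * pd g 4 p,
    p 8 * pd g 9 p - p 9 * pd g 8 p,
    p 9 * pd g 7 p - p 7 * pd g 9 p,
    p 7 * pd g 8 p - p 8 * pd g 7 p]

/-- `γ` is a solution of the reduced equations of motion on the set `s ⊂ ℝ`
(staying in the domain `B × ℝ² × ℝ³ × ℝ³`). -/
def IsSolution (g : ℝ) (γ : ℝ → Fin 10 → ℝ) (s : Set ℝ) : Prop :=
  ∀ t ∈ s, memB (γ t 0) (γ t 1) ∧
    ∀ i : Fin 10, HasDerivAt (fun τ => γ τ i) (RVF g (γ t) i) t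

/-- Liapunov stability of an equilibrium `pstar` relative to
`S_{L,R} = {(b,c,η_l,η_r) : ‖η_l‖ = L, ‖η_r‖ = R}`. -/
def LiapunovStable (g L R : ℝ) (pstar : Fin 10 → ℝ) : Prop :=
  ∀ ε > 0, ∃ δ > 0, ∀ (T : ℝ) (γ : ℝ → Fin 10 → ℝ),
    IsSolution g γ (Set.Ico 0 T) →
    Real.sqrt ((γ 0 4) ^ 2 + (γ 0 5) ^ 2 + (γ 0 6) ^ 2) = L →
    Real.sqrt ((γ 0 7) ^ 2 + (γ 0 8) ^ 2 + (γ 0 9) ^ 2) = R →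
    dist (γ 0) pstar < δ →
    ∀ t ∈ Set.Ico (0:ℝ) T, dist (γ t) pstar < ε

lemma quad_nonneg {A B C : ℝ} (hA : 0 ≤ A) (hC : 0 ≤ C) (hd : 0 ≤ A * C - B ^ 2) (x y : ℝ) :
    0 ≤ A * x ^ 2 + 2 * B * x * y + C * y ^ 2 := by
  rcases hA.eq_or_lt with hA | hA
  · subst hA
    have hB : B = 0 := by nlinarith [sq_nonneg B]
    subst hB
    have := mul_nonneg hC (sq_nonneg y)
    linarith
  have h : A * (A * x ^ 2 + 2 * B * x * y + C * y ^ 2)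
      = (A * x + B * y) ^ 2 + (A * C - B ^ 2) * y ^ 2 := by ring
  have h2 : 0 ≤ A * (A * x ^ 2 + 2 * B * x * y + C * y ^ 2) := by
    rw [h]; positivity
  exact nonneg_of_mul_nonneg_right h2 hA

/-- Pointwise definiteness inequality. -/
lemma key_poly (X Y Z s x y : ℝ) (hZ : 0 < Z) (hZY : Z ≤ Y) (hYX : Y ≤ X) (hY4 : Y ≤ 4 * Z)
    (hs : 0 < s) (hxy : ¬ (x = 0 ∧ y = 0)) :
    0 < (s ^ 3 + (X + Y + Z) * s ^ 2 + (X * Y + Y * Z + X * Z) * s + X * Y * Z) *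
        (s * (8 * X * x ^ 2 + 8 * Z * y ^ 2 + Y * (6 * x ^ 2 - 4 * x * y + 6 * y ^ 2)) +
          (X * Z * (2 * x ^ 2 + 20 * x * y + 2 * y ^ 2) + 6 * Y * (X + Z) * (x - y) ^ 2))
      - 3 / 2 * s * (s * (2 * (X * x + Z * y) - 2 * Y * (x + y)) +
          (2 * X * Z * (x + y) - 2 * X * Y * y - 2 * Y * Z * x)) ^ 2 := by
  obtain ⟨k, hk⟩ : ∃ k, k = (Y - Z) / 3 := ⟨_, rfl⟩
  obtain ⟨v, hv⟩ : ∃ v, v = Z - k := ⟨_, rfl⟩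
  obtain ⟨w, hw⟩ : ∃ w, w = X - Y := ⟨_, rfl⟩
  have hk0 : 0 ≤ k := by rw [hk]; linarith
  have hv0 : 0 ≤ v := by rw [hv, hk]; linarith
  have hw0 : 0 ≤ w := by rw [hw]; linarith
  have hkv : 0 < k + v := by rw [hv]; linarith
  have eZ : Z = k + v := by rw [hv]; ring
  have eY : Y = 4 * k + v := by rw [hv, hk]; ring
  have eX : X = 4 * k + v + w := by rw [hw, hv, hk]; ring
  clear hk hv hw
  have hX : 0 < X := by linarith
  have hY : 0 < Y := by linarith
  -- leading coefficient
  have h4 : 0 < 8 * X * x ^ 2 + 8 * Z * y ^ 2 + Y * (6 * x ^ 2 - 4 * x * y + 6 * y ^ 2) := by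
    have hp : 0 < x ^ 2 + y ^ 2 := by
      rcases not_and_or.mp hxy with h | h <;> positivity
    have : 0 < Y * (6 * x ^ 2 - 4 * x * y + 6 * y ^ 2) := by
      apply mul_pos hY; nlinarith [sq_nonneg (x - y)]
    positivity
  have h3 : 0 ≤ (X * Z * (2 * x ^ 2 + 20 * x * y + 2 * y ^ 2) + 6 * Y * (X + Z) * (x - y) ^ 2)
      + (X + Y + Z) * (8 * X * x ^ 2 + 8 * Z * y ^ 2 + Y * (6 * x ^ 2 - 4 * x * y + 6 * y ^ 2))
      - 3 / 2 * (2 * (X * x + Z * y) - 2 * Y * (x + y)) ^ 2 := by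
    have := quad_nonneg (A := 2 * X ^ 2 + 32 * X * Y + 10 * X * Z + 12 * Y * Z)
      (B := -2 * X * Y + 4 * X * Z - 8 * Y ^ 2 - 2 * Y * Z)
      (C := 12 * X * Y + 10 * X * Z + 32 * Y * Z + 2 * Z ^ 2)
      (by rw [eX, eY, eZ]; ring_nf; positivity) (by rw [eX, eY, eZ]; ring_nf; positivity)
      (by rw [eX, eY, eZ]; ring_nf; positivity) x y
    linarith
  have h2 : 0 ≤ (X + Y + Z) * (X * Z * (2 * x ^ 2 + 20 * x * y + 2 * y ^ 2) + 6 * Y * (X + Z) * (x - y) ^ 2)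
      + (X * Y + Y * Z + X * Z) * (8 * X * x ^ 2 + 8 * Z * y ^ 2 + Y * (6 * x ^ 2 - 4 * x * y + 6 * y ^ 2))
      - 3 * ((2 * (X * x + Z * y) - 2 * Y * (x + y)) * (2 * X * Z * (x + y) - 2 * X * Y * y - 2 * Y * Z * x)) := by
    have := quad_nonneg (A := 14 * X ^ 2 * Y - 2 * X ^ 2 * Z + 12 * X * Y ^ 2 + 52 * X * Y * Z + 2 * X * Z ^ 2 + 6 * Y * Z ^ 2)
      (B := 4 * X ^ 2 * Z - 14 * X * Y ^ 2 + 8 * X * Y * Z + 4 * X * Z ^ 2 - 14 * Y ^ 2 * Z)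
      (C := 6 * X ^ 2 * Y + 2 * X ^ 2 * Z + 52 * X * Y * Z - 2 * X * Z ^ 2 + 12 * Y ^ 2 * Z + 14 * Y * Z ^ 2)
      (by rw [eX, eY, eZ]; ring_nf; positivity) (by rw [eX, eY, eZ]; ring_nf; positivity)
      (by rw [eX, eY, eZ]; ring_nf; positivity) x y
    linarith
  have h1 : 0 ≤ (X * Y + Y * Z + X * Z) * (X * Z * (2 * x ^ 2 + 20 * x * y + 2 * y ^ 2) + 6 * Y * (X + Z) * (x - y) ^ 2)
      + (X * Y * Z) * (8 * X * x ^ 2 + 8 * Z * y ^ 2 + Y * (6 * x ^ 2 - 4 * x * y + 6 * y ^ 2))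
      - 3 / 2 * (2 * X * Z * (x + y) - 2 * X * Y * y - 2 * Y * Z * x) ^ 2 := by
    have := quad_nonneg (A := 6 * X ^ 2 * Y ^ 2 + 16 * X ^ 2 * Y * Z - 4 * X ^ 2 * Z ^ 2 + 18 * X * Y ^ 2 * Z + 20 * X * Y * Z ^ 2)
      (B := -6 * X ^ 2 * Y ^ 2 + 10 * X ^ 2 * Y * Z + 4 * X ^ 2 * Z ^ 2 - 20 * X * Y ^ 2 * Z + 10 * X * Y * Z ^ 2 - 6 * Y ^ 2 * Z ^ 2)
      (C := 20 * X ^ 2 * Y * Z - 4 * X ^ 2 * Z ^ 2 + 18 * X * Y ^ 2 * Z + 16 * X * Y * Z ^ 2 + 6 * Y ^ 2 * Z ^ 2)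
      (by rw [eX, eY, eZ]; ring_nf; positivity) (by rw [eX, eY, eZ]; ring_nf; positivity)
      (by rw [eX, eY, eZ]; ring_nf; positivity) x y
    linarith
  have h0 : 0 ≤ X * Z * (2 * x ^ 2 + 20 * x * y + 2 * y ^ 2) + 6 * Y * (X + Z) * (x - y) ^ 2 := by
    have := quad_nonneg (A := 6 * X * Y + 2 * X * Z + 6 * Y * Z)
      (B := -6 * X * Y + 10 * X * Z - 6 * Y * Z)
      (C := 6 * X * Y + 2 * X * Z + 6 * Y * Z)
      (by rw [eX, eY, eZ]; ring_nf; positivity) (by rw [eX, eY, eZ]; ring_nf; positivity)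
      (by rw [eX, eY, eZ]; ring_nf; positivity) x y
    linarith
  have e : (s ^ 3 + (X + Y + Z) * s ^ 2 + (X * Y + Y * Z + X * Z) * s + X * Y * Z) *
        (s * (8 * X * x ^ 2 + 8 * Z * y ^ 2 + Y * (6 * x ^ 2 - 4 * x * y + 6 * y ^ 2)) +
          (X * Z * (2 * x ^ 2 + 20 * x * y + 2 * y ^ 2) + 6 * Y * (X + Z) * (x - y) ^ 2))
      - 3 / 2 * s * (s * (2 * (X * x + Z * y) - 2 * Y * (x + y)) +
          (2 * X * Z * (x + y) - 2 * X * Y * y - 2 * Y * Z * x)) ^ 2 = s ^ 4 * (8 * X * x ^ 2 + 8 * Z * y ^ 2 + Y * (6 * x ^ 2 - 4 * x * y + 6 * y ^ 2)) + s ^ 3 * ((X * Z * (2 * x ^ 2 + 20 * x * y + 2 * y ^ 2) + 6 * Y * (X + Z) * (x - y) ^ 2)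
      + (X + Y + Z) * (8 * X * x ^ 2 + 8 * Z * y ^ 2 + Y * (6 * x ^ 2 - 4 * x * y + 6 * y ^ 2))
      - 3 / 2 * (2 * (X * x + Z * y) - 2 * Y * (x + y)) ^ 2) + s ^ 2 * ((X + Y + Z) * (X * Z * (2 * x ^ 2 + 20 * x * y + 2 * y ^ 2) + 6 * Y * (X + Z) * (x - y) ^ 2)
      + (X * Y + Y * Z + X * Z) * (8 * X * x ^ 2 + 8 * Z * y ^ 2 + Y * (6 * x ^ 2 - 4 * x * y + 6 * y ^ 2))
      - 3 * ((2 * (X * x + Z * y) - 2 * Y * (x + y)) * (2 * X * Z * (x + y) - 2 * X * Y * y - 2 * Y * Z * x))) + s * ((X * Y + Y * Z + X * Z) * (X * Z * (2 * x ^ 2 + 20 * x * y + 2 * y ^ 2) + 6 * Y * (X + Z) * (x - y) ^ 2)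
      + (X * Y * Z) * (8 * X * x ^ 2 + 8 * Z * y ^ 2 + Y * (6 * x ^ 2 - 4 * x * y + 6 * y ^ 2))
      - 3 / 2 * (2 * X * Z * (x + y) - 2 * X * Y * y - 2 * Y * Z * x) ^ 2) + X * Y * Z * (X * Z * (2 * x ^ 2 + 20 * x * y + 2 * y ^ 2) + 6 * Y * (X + Z) * (x - y) ^ 2) := by ring
  rw [e]
  have := mul_pos (pow_pos hs 4) h4
  have := mul_nonneg (pow_pos hs 3).le h3
  have := mul_nonneg (pow_pos hs 2).le h2
  have := mul_nonneg hs.le h1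
  have := mul_nonneg (mul_pos (mul_pos hX hY) hZ).le h0
  linarith

noncomputable def rS (p q : ℝ) : ℝ := (p⁻¹ + q⁻¹) / 2
noncomputable def rR (p q : ℝ) : ℝ := (q⁻¹ - p⁻¹) / 4
noncomputable def rS1 (p q x y : ℝ) : ℝ := (-x * (p⁻¹) ^ 2 - y * (q⁻¹) ^ 2) / 2
noncomputable def rR1 (p q x y : ℝ) : ℝ := (x * (p⁻¹) ^ 2 - y * (q⁻¹) ^ 2) / 4
noncomputable def rS2 (p q x y : ℝ) : ℝ := x ^ 2 * (p⁻¹) ^ 3 + y ^ 2 * (q⁻¹) ^ 3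
noncomputable def rR2 (p q x y : ℝ) : ℝ := (y ^ 2 * (q⁻¹) ^ 3 - x ^ 2 * (p⁻¹) ^ 3) / 2
noncomputable def rE1 (p q : ℝ) : ℝ := rS p q + ((rR p q)⁻¹) ^ 2
noncomputable def rE2 (p q : ℝ) : ℝ := (rR p q) ^ 2 + rS p q * ((rR p q)⁻¹) ^ 2
noncomputable def rE11 (p q x y : ℝ) : ℝ := rS1 p q x y - 2 * rR1 p q x y * ((rR p q)⁻¹) ^ 3
noncomputable def rE21 (p q x y : ℝ) : ℝ := 2 * rR p q * rR1 p q x y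
  + rS1 p q x y * ((rR p q)⁻¹) ^ 2 - 2 * rS p q * rR1 p q x y * ((rR p q)⁻¹) ^ 3
noncomputable def rE12 (p q x y : ℝ) : ℝ := rS2 p q x y + 6 * (rR1 p q x y) ^ 2 * ((rR p q)⁻¹) ^ 4
  - 2 * rR2 p q x y * ((rR p q)⁻¹) ^ 3
noncomputable def rE22 (p q x y : ℝ) : ℝ := 2 * (rR1 p q x y) ^ 2 + 2 * rR p q * rR2 p q x y
  + rS2 p q x y * ((rR p q)⁻¹) ^ 2 - 4 * rS1 p q x y * rR1 p q x y * ((rR p q)⁻¹) ^ 3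
  + rS p q * (6 * (rR1 p q x y) ^ 2 * ((rR p q)⁻¹) ^ 4 - 2 * rR2 p q x y * ((rR p q)⁻¹) ^ 3)

/-- The cubic under the square root. -/
def Dc (e f s : ℝ) : ℝ := s ^ 3 + e * s ^ 2 + f * s + 1

/-- Region of strict convexity. -/
def Om (p q : ℝ) : Prop := ∃ a z : ℝ, 0 < z ∧ z < a ∧ p = ((a - z) ^ 2)⁻¹ ∧ q = ((a + z) ^ 2)⁻¹ ∧
  z ^ 2 ≤ ((a * z)⁻¹) ^ 2 ∧ ((a * z)⁻¹) ^ 2 ≤ 4 * z ^ 2 ∧ ((a * z)⁻¹) ^ 2 ≤ a ^ 2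

lemma rS_az (a z : ℝ) : rS ((a - z) ^ 2)⁻¹ ((a + z) ^ 2)⁻¹ = a ^ 2 + z ^ 2 := by
  unfold rS; rw [inv_inv, inv_inv]; ring
lemma rR_az (a z : ℝ) : rR ((a - z) ^ 2)⁻¹ ((a + z) ^ 2)⁻¹ = a * z := by
  unfold rR; rw [inv_inv, inv_inv]; ring

lemma Dineq (p q s x y : ℝ) (hO : Om p q) (hs : 0 < s) (hxy : ¬ (x = 0 ∧ y = 0)) :
    3 / 2 * (s ^ 2 * rE11 p q x y + s * rE21 p q x y) ^ 2 <
      Dc (rE1 p q) (rE2 p q) s * (s ^ 2 * rE12 p q x y + s * rE22 p q x y) := by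
  obtain ⟨a, z, hz, hza, rfl, rfl, h1, h2, h3⟩ := hO
  have ha : 0 < a := hz.trans hza
  have hx0 : 0 < a - z := by linarith
  have hy0 : 0 < a + z := by linarith
  obtain ⟨m, hm⟩ : ∃ m, m = (-x * (a - z) ^ 3 / 2 - y * (a + z) ^ 3 / 2) / (2 * a) := ⟨_, rfl⟩
  obtain ⟨n, hn⟩ : ∃ n, n = (x * (a - z) ^ 3 / 2 - y * (a + z) ^ 3 / 2) / (2 * z) := ⟨_, rfl⟩
  have ex : x = -2 * (a * m - z * n) / (a - z) ^ 3 := by rw [hm, hn]; field_simp; ring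
  have ey : y = -2 * (a * m + z * n) / (a + z) ^ 3 := by rw [hm, hn]; field_simp; ring
  have hmn : ¬ (m = 0 ∧ n = 0) := by
    rintro ⟨h, h'⟩
    apply hxy
    rw [ex, ey, h, h']; simp
  clear hm hn
  have key := key_poly (a ^ 2) (((a * z)⁻¹) ^ 2) (z ^ 2) s m n (by positivity) h1 h3 h2 hs hmn
  obtain ⟨Y, hY⟩ : ∃ Y, Y = (a * z)⁻¹ := ⟨_, rfl⟩
  have hYaz : a * z * Y = 1 := by rw [hY]; field_simp
  have f1 : rS1 ((a - z) ^ 2)⁻¹ ((a + z) ^ 2)⁻¹ x y = 2 * (a ^ 2 * m + z ^ 2 * n) := by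
    unfold rS1; rw [inv_inv, inv_inv, ex, ey]; field_simp; ring
  have f2 : rR1 ((a - z) ^ 2)⁻¹ ((a + z) ^ 2)⁻¹ x y = a * z * (m + n) := by
    unfold rR1; rw [inv_inv, inv_inv, ex, ey]; field_simp; ring
  have f3 : rS2 ((a - z) ^ 2)⁻¹ ((a + z) ^ 2)⁻¹ x y = 8 * (a ^ 2 * m ^ 2 + z ^ 2 * n ^ 2) := by
    unfold rS2; rw [inv_inv, inv_inv, ex, ey]; field_simp; ring
  have f4 : rR2 ((a - z) ^ 2)⁻¹ ((a + z) ^ 2)⁻¹ x y = 8 * (a * z) * m * n := by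
    unfold rR2; rw [inv_inv, inv_inv, ex, ey]; field_simp; ring
  have g1 : rE11 ((a - z) ^ 2)⁻¹ ((a + z) ^ 2)⁻¹ x y =
      2 * (a ^ 2 * m + z ^ 2 * n) - 2 * Y ^ 2 * (m + n) := by
    unfold rE11; rw [f1, f2, rR_az, hY]; field_simp
  have g2 : rE21 ((a - z) ^ 2)⁻¹ ((a + z) ^ 2)⁻¹ x y =
      2 * a ^ 2 * z ^ 2 * (m + n) - 2 * a ^ 2 * Y ^ 2 * n - 2 * Y ^ 2 * z ^ 2 * m := by
    unfold rE21; rw [f1, f2, rR_az, rS_az, hY]; field_simp; ring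
  have g3 : rE12 ((a - z) ^ 2)⁻¹ ((a + z) ^ 2)⁻¹ x y =
      8 * a ^ 2 * m ^ 2 + 8 * z ^ 2 * n ^ 2 + Y ^ 2 * (6 * m ^ 2 - 4 * m * n + 6 * n ^ 2) := by
    unfold rE12; rw [f2, f3, f4, rR_az, hY]; field_simp; ring
  have g4 : rE22 ((a - z) ^ 2)⁻¹ ((a + z) ^ 2)⁻¹ x y =
      a ^ 2 * z ^ 2 * (2 * m ^ 2 + 20 * m * n + 2 * n ^ 2)
        + 6 * Y ^ 2 * (a ^ 2 + z ^ 2) * (m - n) ^ 2 := by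
    unfold rE22; rw [f1, f2, f3, f4, rR_az, rS_az, hY]; field_simp; ring
  have g5 : Dc (rE1 ((a - z) ^ 2)⁻¹ ((a + z) ^ 2)⁻¹) (rE2 ((a - z) ^ 2)⁻¹ ((a + z) ^ 2)⁻¹) s =
      s ^ 3 + (a ^ 2 + Y ^ 2 + z ^ 2) * s ^ 2 + (a ^ 2 * Y ^ 2 + Y ^ 2 * z ^ 2 + a ^ 2 * z ^ 2) * s
        + a ^ 2 * Y ^ 2 * z ^ 2 := by
    unfold rE1 rE2 Dc; rw [rR_az, rS_az, ← hY]
    linear_combination (-1 - a * z * Y) * hYaz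
  rw [g1, g2, g3, g4, g5]
  rw [← hY] at key
  have := mul_pos hs key
  linarith

section
variable (p q x y t : ℝ)

lemma hd_inv (p x t : ℝ) (hp : p + t * x ≠ 0) :
    HasDerivAt (fun t => (p + t * x)⁻¹) (-x * ((p + t * x)⁻¹) ^ 2) t := by
  have h : HasDerivAt (fun t => p + t * x) x t := by
    simpa using ((hasDerivAt_id t).mul_const x).const_add p
  refine (h.inv hp).congr_deriv ?_
  field_simp

lemma hd_S (hp : (p + t * x) ≠ 0) (hq : (q + t * y) ≠ 0) :
    HasDerivAt (fun t => rS (p + t * x) (q + t * y)) (rS1 (p + t * x) (q + t * y) x y) t := by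
  have := ((hd_inv p x t hp).add (hd_inv q y t hq)).div_const 2
  refine this.congr_deriv ?_
  unfold rS1; ring

lemma hd_R (hp : (p + t * x) ≠ 0) (hq : (q + t * y) ≠ 0) :
    HasDerivAt (fun t => rR (p + t * x) (q + t * y)) (rR1 (p + t * x) (q + t * y) x y) t := by
  have := ((hd_inv q y t hq).sub (hd_inv p x t hp)).div_const 4
  refine this.congr_deriv ?_
  unfold rR1; ring

lemma hd_S1 (hp : (p + t * x) ≠ 0) (hq : (q + t * y) ≠ 0) :
    HasDerivAt (fun t => rS1 (p + t * x) (q + t * y) x y) (rS2 (p + t * x) (q + t * y) x y) t := by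
  have := ((((hd_inv p x t hp).pow 2).const_mul (-x)).sub
    (((hd_inv q y t hq).pow 2).const_mul y)).div_const 2
  refine this.congr_deriv ?_
  unfold rS2
  generalize (p + t * x)⁻¹ = A
  generalize (q + t * y)⁻¹ = B
  push_cast; ring

lemma hd_R1 (hp : (p + t * x) ≠ 0) (hq : (q + t * y) ≠ 0) :
    HasDerivAt (fun t => rR1 (p + t * x) (q + t * y) x y) (rR2 (p + t * x) (q + t * y) x y) t := by
  have := ((((hd_inv p x t hp).pow 2).const_mul x).sub
    (((hd_inv q y t hq).pow 2).const_mul y)).div_const 4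
  refine this.congr_deriv ?_
  unfold rR2
  generalize (p + t * x)⁻¹ = A
  generalize (q + t * y)⁻¹ = B
  push_cast; ring

lemma hd_Ri (hp : (p + t * x) ≠ 0) (hq : (q + t * y) ≠ 0) (hR : rR (p + t * x) (q + t * y) ≠ 0) :
    HasDerivAt (fun t => (rR (p + t * x) (q + t * y))⁻¹)
      (-rR1 (p + t * x) (q + t * y) x y * ((rR (p + t * x) (q + t * y))⁻¹) ^ 2) t := by
  refine ((hd_R p q x y t hp hq).inv hR).congr_deriv ?_
  field_simp

lemma hd_E1 (hp : (p + t * x) ≠ 0) (hq : (q + t * y) ≠ 0) (hR : rR (p + t * x) (q + t * y) ≠ 0) :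
    HasDerivAt (fun t => rE1 (p + t * x) (q + t * y)) (rE11 (p + t * x) (q + t * y) x y) t := by
  have := (hd_S p q x y t hp hq).add ((hd_Ri p q x y t hp hq hR).pow 2)
  refine this.congr_deriv ?_
  unfold rE11; simp; ring

lemma hd_E2 (hp : (p + t * x) ≠ 0) (hq : (q + t * y) ≠ 0) (hR : rR (p + t * x) (q + t * y) ≠ 0) :
    HasDerivAt (fun t => rE2 (p + t * x) (q + t * y)) (rE21 (p + t * x) (q + t * y) x y) t := by
  have := ((hd_R p q x y t hp hq).pow 2).add
    ((hd_S p q x y t hp hq).mul ((hd_Ri p q x y t hp hq hR).pow 2))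
  refine this.congr_deriv ?_
  unfold rE21; simp; ring

lemma hd_E11 (hp : (p + t * x) ≠ 0) (hq : (q + t * y) ≠ 0) (hR : rR (p + t * x) (q + t * y) ≠ 0) :
    HasDerivAt (fun t => rE11 (p + t * x) (q + t * y) x y) (rE12 (p + t * x) (q + t * y) x y) t := by
  have := (hd_S1 p q x y t hp hq).sub
    (((hd_R1 p q x y t hp hq).const_mul 2).mul ((hd_Ri p q x y t hp hq hR).pow 3))
  refine this.congr_deriv ?_
  unfold rE12; simp; ring

lemma hd_E21 (hp : (p + t * x) ≠ 0) (hq : (q + t * y) ≠ 0) (hR : rR (p + t * x) (q + t * y) ≠ 0) :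
    HasDerivAt (fun t => rE21 (p + t * x) (q + t * y) x y) (rE22 (p + t * x) (q + t * y) x y) t := by
  have := ((((hd_R p q x y t hp hq).const_mul 2).mul (hd_R1 p q x y t hp hq)).add
    ((hd_S1 p q x y t hp hq).mul ((hd_Ri p q x y t hp hq hR).pow 2))).sub
    ((((hd_S p q x y t hp hq).const_mul 2).mul (hd_R1 p q x y t hp hq)).mul
      ((hd_Ri p q x y t hp hq hR).pow 3))
  refine this.congr_deriv ?_
  unfold rE22; simp only [Pi.mul_apply, Pi.pow_apply]
  obtain ⟨r, hr⟩ : ∃ r, r = (rR (p + t * x) (q + t * y))⁻¹ := ⟨_, rfl⟩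
  simp [← hr]; ring
end

lemma Om.facts {p q : ℝ} (h : Om p q) : 0 < p ∧ 0 < q ∧ 0 < rR p q ∧ 0 < rE1 p q ∧ 0 < rE2 p q := by
  obtain ⟨a, z, hz, hza, rfl, rfl, -⟩ := h
  have ha : 0 < a := hz.trans hza
  have hx0 : 0 < a - z := by linarith
  unfold rE1 rE2
  rw [rR_az, rS_az]
  refine ⟨by positivity, by positivity, by positivity, by positivity, by positivity⟩

lemma Dc_pos {e f s : ℝ} (he : 0 ≤ e) (hf : 0 ≤ f) (hs : 0 ≤ s) : 0 < Dc e f s := by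
  unfold Dc; positivity

lemma strict_tangent (p q x y s : ℝ) (hs : 0 < s) (hxy : ¬ (x = 0 ∧ y = 0))
    (hO : ∀ t ∈ Set.Icc (0:ℝ) 1, Om (p + t * x) (q + t * y)) :
    (Dc (rE1 (p + x) (q + y)) (rE2 (p + x) (q + y)) s) ^ (-(1:ℝ)/2) <
      (Dc (rE1 p q) (rE2 p q) s) ^ (-(1:ℝ)/2) -
        1 / 2 * ((rE11 p q x y * s ^ 2 + rE21 p q x y * s) *
          (Dc (rE1 p q) (rE2 p q) s) ^ (-(3:ℝ)/2)) := by
  set D : ℝ → ℝ := fun t => Dc (rE1 (p + t * x) (q + t * y)) (rE2 (p + t * x) (q + t * y)) s with hD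
  set D1 : ℝ → ℝ := fun t => s ^ 2 * rE11 (p + t * x) (q + t * y) x y
    + s * rE21 (p + t * x) (q + t * y) x y with hD1
  set D2 : ℝ → ℝ := fun t => s ^ 2 * rE12 (p + t * x) (q + t * y) x y
    + s * rE22 (p + t * x) (q + t * y) x y with hD2
  have hDp : ∀ t ∈ Set.Icc (0:ℝ) 1, 0 < D t := fun t ht =>
    Dc_pos (hO t ht).facts.2.2.2.1.le (hO t ht).facts.2.2.2.2.le hs.le
  have hdD : ∀ t ∈ Set.Icc (0:ℝ) 1, HasDerivAt D (D1 t) t := by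
    intro t ht
    obtain ⟨h1, h2, h3, -, -⟩ := (hO t ht).facts
    have := ((((hd_E1 p q x y t h1.ne' h2.ne' h3.ne').mul_const (s ^ 2)).const_add (s ^ 3)).add
      ((hd_E2 p q x y t h1.ne' h2.ne' h3.ne').mul_const s)).add_const 1
    refine this.congr_deriv ?_
    simp only [hD1]; ring
  have hdD1 : ∀ t ∈ Set.Icc (0:ℝ) 1, HasDerivAt D1 (D2 t) t := by
    intro t ht
    obtain ⟨h1, h2, h3, -, -⟩ := (hO t ht).facts
    exact ((hd_E11 p q x y t h1.ne' h2.ne' h3.ne').const_mul (s ^ 2)).add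
      ((hd_E21 p q x y t h1.ne' h2.ne' h3.ne').const_mul s)
  have hineq : ∀ t ∈ Set.Icc (0:ℝ) 1, 3 / 2 * (D1 t) ^ 2 < D t * D2 t := fun t ht =>
    Dineq _ _ s x y (hO t ht) hs hxy
  have hF : ∀ t ∈ Set.Icc (0:ℝ) 1, HasDerivAt (fun t => (D t) ^ (-(1:ℝ)/2))
      (-(1/2) * (D1 t * (D t) ^ (-(3:ℝ)/2))) t := by
    intro t ht
    refine ((hdD t ht).rpow_const (p := -(1:ℝ)/2) (Or.inl (hDp t ht).ne')).congr_deriv ?_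
    norm_num; ring
  have hF1 : ∀ t ∈ Set.Icc (0:ℝ) 1, HasDerivAt (fun t => -(1/2) * (D1 t * (D t) ^ (-(3:ℝ)/2)))
      (-(1/2) * ((D t) ^ (-(5:ℝ)/2) * (D t * D2 t - 3 / 2 * (D1 t) ^ 2))) t := by
    intro t ht
    refine (((hdD1 t ht).mul ((hdD t ht).rpow_const (p := -(3:ℝ)/2)
      (Or.inl (hDp t ht).ne'))).const_mul (-(1/2):ℝ)).congr_deriv ?_
    have : (D t) ^ (-(3:ℝ)/2) = (D t) ^ (-(5:ℝ)/2) * D t := by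
      rw [← Real.rpow_add_one (hDp t ht).ne']; norm_num
    rw [this]; norm_num; ring
  obtain ⟨c, hc, hc2⟩ := exists_hasDerivAt_eq_slope _ _ (zero_lt_one' ℝ)
    (fun t ht => (hF t ht).continuousAt.continuousWithinAt)
    (fun t ht => hF t (Set.Ioo_subset_Icc_self ht))
  have hc1 : Set.Icc 0 c ⊆ Set.Icc (0:ℝ) 1 := Set.Icc_subset_Icc_right hc.2.le
  obtain ⟨d, hd, hd2⟩ := exists_hasDerivAt_eq_slope _ _ hc.1
    (fun t ht => (hF1 t (hc1 ht)).continuousAt.continuousWithinAt)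
    (fun t ht => hF1 t (hc1 (Set.Ioo_subset_Icc_self ht)))
  have hdm := hc1 (Set.Ioo_subset_Icc_self hd)
  have hneg : 0 < (D d) ^ (-(5:ℝ)/2) * (D d * D2 d - 3 / 2 * (D1 d) ^ 2) :=
    mul_pos (Real.rpow_pos_of_pos (hDp d hdm) _) (by linarith [hineq d hdm])
  rw [eq_div_iff (by linarith [hc.1])] at hd2
  have hlt := mul_pos hneg hc.1
  have e0 : D 0 = Dc (rE1 p q) (rE2 p q) s := by simp [hD]
  have e1 : D 1 = Dc (rE1 (p + x) (q + y)) (rE2 (p + x) (q + y)) s := by simp [hD]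
  have e2 : D1 0 = rE11 p q x y * s ^ 2 + rE21 p q x y * s := by simp [hD1]; ring
  simp only [sub_zero, div_one, e0, e1, e2] at hc2 hd2
  linarith

lemma Dc_lower {e f s : ℝ} (he : 0 ≤ e) (hf : 0 ≤ f) (hs : 0 ≤ s) :
    (s + 1) ^ 3 / 4 ≤ Dc e f s := by
  unfold Dc
  have h1 : 0 ≤ e * s ^ 2 := by positivity
  have h2 : 0 ≤ f * s := by positivity
  have h3 : 0 ≤ (s + 1) * (s - 1) ^ 2 := by positivity
  nlinarith

lemma quarter_rpow (s : ℝ) (hs : 0 ≤ s) (r c : ℝ) (h4 : (4:ℝ) ^ (-r) = c) :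
    ((s + 1) ^ 3 / 4) ^ r = c * (s + 1) ^ (3 * r) := by
  rw [div_rpow (by positivity) (by norm_num), ← rpow_natCast, ← rpow_mul (by positivity),
    div_eq_mul_inv, ← rpow_neg (by norm_num), h4]
  push_cast; ring

lemma Dc_half_bound {e f s : ℝ} (he : 0 ≤ e) (hf : 0 ≤ f) (hs : 0 ≤ s) :
    (Dc e f s) ^ (-(1:ℝ)/2) ≤ 2 * (s + 1) ^ (-(3:ℝ)/2) := by
  have h := rpow_le_rpow_of_nonpos (by positivity) (Dc_lower he hf hs)
    (show -(1:ℝ)/2 ≤ 0 by norm_num)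
  rw [quarter_rpow s hs (-(1:ℝ)/2) 2] at h
  · convert h using 3; norm_num
  · rw [show (4:ℝ) = 2 ^ (2:ℝ) by norm_num, ← rpow_mul (by norm_num)]; norm_num

lemma Dc_three_bound {e f s : ℝ} (he : 0 ≤ e) (hf : 0 ≤ f) (hs : 0 ≤ s) :
    (s ^ 2 + s) * (Dc e f s) ^ (-(3:ℝ)/2) ≤ 8 * (s + 1) ^ (-(5:ℝ)/2) := by
  have h := rpow_le_rpow_of_nonpos (by positivity) (Dc_lower he hf hs)
    (show -(3:ℝ)/2 ≤ 0 by norm_num)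
  rw [quarter_rpow s hs (-(3:ℝ)/2) 8] at h
  · have e1 : (s + 1) ^ (-(5:ℝ)/2) = (s + 1) ^ 2 * (s + 1) ^ (3 * (-(3:ℝ)/2)) := by
      rw [← rpow_natCast, ← rpow_add (by positivity)]; norm_num
    rw [e1]
    have h2 : s ^ 2 + s ≤ (s + 1) ^ 2 := by nlinarith
    have hp : 0 < (s + 1) ^ (3 * (-(3:ℝ)/2)) := rpow_pos_of_pos (by positivity) _
    calc _ ≤ (s ^ 2 + s) * (8 * (s + 1) ^ (3 * (-(3:ℝ)/2))) := by gcongr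
      _ ≤ (s + 1) ^ 2 * (8 * (s + 1) ^ (3 * (-(3:ℝ)/2))) := by gcongr
      _ = _ := by ring
  · rw [show (4:ℝ) = 2 ^ (2:ℝ) by norm_num, ← rpow_mul (by norm_num)]; norm_num

lemma Dc_cont (e f : ℝ) : Continuous (fun s => Dc e f s) := by unfold Dc; fun_prop

lemma Dc_rpow_meas (e f r : ℝ) : Measurable (fun s => (Dc e f s) ^ r) :=
  (Dc_cont e f).measurable.pow_const r

lemma int_half {e f : ℝ} (he : 0 ≤ e) (hf : 0 ≤ f) :
    IntegrableOn (fun s => (Dc e f s) ^ (-(1:ℝ)/2)) (Set.Ioi 0) := by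
  refine Integrable.mono' ((integrableOn_add_rpow_Ioi_of_lt (a := -(3:ℝ)/2) (m := 1) (c := 0)
    (by norm_num) (by norm_num)).const_mul 2) (Dc_rpow_meas e f _).aestronglyMeasurable ?_
  filter_upwards [ae_restrict_mem measurableSet_Ioi] with s hs
  have hs : 0 < s := hs
  rw [norm_of_nonneg (rpow_nonneg (Dc_pos he hf hs.le).le _)]
  exact Dc_half_bound he hf hs.le

lemma int_J {e f : ℝ} (he : 0 ≤ e) (hf : 0 ≤ f) (x y : ℝ) :
    IntegrableOn (fun s => (x * s ^ 2 + y * s) * (Dc e f s) ^ (-(3:ℝ)/2)) (Set.Ioi 0) := by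
  refine Integrable.mono' ((integrableOn_add_rpow_Ioi_of_lt (a := -(5:ℝ)/2) (m := 1) (c := 0)
    (by norm_num) (by norm_num)).const_mul ((|x| + |y|) * 8))
    (((by fun_prop : Continuous fun s : ℝ => x * s ^ 2 + y * s).measurable.mul
      (Dc_rpow_meas e f _)).aestronglyMeasurable) ?_
  filter_upwards [ae_restrict_mem measurableSet_Ioi] with s hs
  have hs : 0 < s := hs
  have hp := rpow_nonneg (Dc_pos he hf hs.le).le (-(3:ℝ)/2)
  rw [norm_mul, norm_of_nonneg hp]
  have h1 : ‖x * s ^ 2 + y * s‖ ≤ (|x| + |y|) * (s ^ 2 + s) := by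
    refine (norm_add_le _ _).trans ?_
    rw [norm_mul, norm_mul, norm_of_nonneg (show 0 ≤ s ^ 2 by positivity), norm_of_nonneg hs.le,
      Real.norm_eq_abs, Real.norm_eq_abs]
    have := abs_nonneg x
    have := abs_nonneg y
    have : 0 ≤ |x| * s + |y| * s ^ 2 := by positivity
    linarith
  calc _ ≤ (|x| + |y|) * (s ^ 2 + s) * (Dc e f s) ^ (-(3:ℝ)/2) := by gcongr
    _ = (|x| + |y|) * ((s ^ 2 + s) * (Dc e f s) ^ (-(3:ℝ)/2)) := by ring
    _ ≤ (|x| + |y|) * (8 * (s + 1) ^ (-(5:ℝ)/2)) := by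
      exact mul_le_mul_of_nonneg_left (Dc_three_bound he hf hs.le) (by positivity)
    _ = _ := by ring

/-- The potential integral. -/
noncomputable def Iint (e f : ℝ) : ℝ := ∫ s in Set.Ioi (0:ℝ), (Dc e f s) ^ (-(1:ℝ)/2)

noncomputable def J1 (e f : ℝ) : ℝ := ∫ s in Set.Ioi (0:ℝ), s * (Dc e f s) ^ (-(3:ℝ)/2)
noncomputable def J2 (e f : ℝ) : ℝ := ∫ s in Set.Ioi (0:ℝ), s ^ 2 * (Dc e f s) ^ (-(3:ℝ)/2)

lemma J_split {e f : ℝ} (he : 0 ≤ e) (hf : 0 ≤ f) (x y : ℝ) :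
    ∫ s in Set.Ioi (0:ℝ), (x * s ^ 2 + y * s) * (Dc e f s) ^ (-(3:ℝ)/2)
      = x * J2 e f + y * J1 e f := by
  have h1 : IntegrableOn (fun s => s ^ 2 * (Dc e f s) ^ (-(3:ℝ)/2)) (Set.Ioi 0) := by
    simpa using int_J he hf 1 0
  have h2 : IntegrableOn (fun s => s * (Dc e f s) ^ (-(3:ℝ)/2)) (Set.Ioi 0) := by
    simpa using int_J he hf 0 1
  unfold J1 J2
  rw [← integral_const_mul, ← integral_const_mul, ← integral_add]
  · congr 1; ext s; ring
  · refine Integrable.const_mul ?_ x; exact h1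
  · refine Integrable.const_mul ?_ y; exact h2

lemma pos_of_pos_Ioi {h : ℝ → ℝ} (hi : IntegrableOn h (Set.Ioi 0)) (hp : ∀ s, 0 < s → 0 < h s) :
    0 < ∫ s in Set.Ioi (0:ℝ), h s := by
  rw [setIntegral_pos_iff_support_of_nonneg_ae]
  · have : Function.support h ∩ Set.Ioi 0 = Set.Ioi 0 := by
      ext s; simp only [Set.mem_inter_iff, Function.mem_support, Set.mem_Ioi, and_iff_right_iff_imp]
      exact fun hs => (hp s hs).ne'
    rw [this]; simp
  · filter_upwards [ae_restrict_mem measurableSet_Ioi] with s hs using (hp s hs).le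
  · exact hi

lemma J1_pos {e f : ℝ} (he : 0 ≤ e) (hf : 0 ≤ f) : 0 < J1 e f := by
  refine pos_of_pos_Ioi (by simpa using int_J he hf 0 1) fun s hs => ?_
  exact mul_pos hs (rpow_pos_of_pos (Dc_pos he hf hs.le) _)

lemma J2_pos {e f : ℝ} (he : 0 ≤ e) (hf : 0 ≤ f) : 0 < J2 e f := by
  refine pos_of_pos_Ioi (by simpa using int_J he hf 1 0) fun s hs => ?_
  exact mul_pos (by positivity) (rpow_pos_of_pos (Dc_pos he hf hs.le) _)

lemma integrated_tangent (p q x y : ℝ) (hxy : ¬ (x = 0 ∧ y = 0))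
    (hO : ∀ t ∈ Set.Icc (0:ℝ) 1, Om (p + t * x) (q + t * y)) :
    Iint (rE1 (p + x) (q + y)) (rE2 (p + x) (q + y)) <
      Iint (rE1 p q) (rE2 p q) -
        1 / 2 * (rE11 p q x y * J2 (rE1 p q) (rE2 p q) + rE21 p q x y * J1 (rE1 p q) (rE2 p q)) := by
  have h0 := (hO 0 (by simp)).facts
  have h1 := (hO 1 (by simp)).facts
  simp only [zero_mul, add_zero, one_mul] at h0 h1
  obtain ⟨-, -, -, he0, hf0⟩ := h0
  obtain ⟨-, -, -, he1, hf1⟩ := h1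
  have i0 := int_half he0.le hf0.le
  have i1 := int_half he1.le hf1.le
  have ij := (int_J he0.le hf0.le (rE11 p q x y) (rE21 p q x y)).const_mul (1/2)
  rw [← J_split he0.le hf0.le]
  unfold Iint
  rw [← integral_const_mul, ← integral_sub i0 ij, ← sub_pos]
  have e := integral_sub (i0.sub ij) i1
  simp only [Pi.sub_apply] at e
  rw [← e]
  refine pos_of_pos_Ioi ((i0.sub ij).sub i1) fun s hs => ?_
  rw [sub_pos]
  exact strict_tangent p q x y s hs hxy hO

lemma Iint_diff {e f : ℝ} (he : 0 < e) (hf : 0 < f) :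
    DifferentiableAt ℝ (fun v : ℝ × ℝ => Iint v.1 v.2) (e, f) := by
  have hset : {v : ℝ × ℝ | 0 < v.1 ∧ 0 < v.2} ∈ nhds (e, f) := by
    apply IsOpen.mem_nhds
    · exact (isOpen_lt continuous_const continuous_fst).inter
        (isOpen_lt continuous_const continuous_snd)
    · exact ⟨he, hf⟩
  have := hasFDerivAt_integral_of_dominated_of_fderiv_le (𝕜 := ℝ)
    (μ := volume.restrict (Set.Ioi (0:ℝ)))
    (F := fun (v : ℝ × ℝ) s => (Dc v.1 v.2 s) ^ (-(1:ℝ)/2)) (x₀ := (e, f))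
    (bound := fun s => 8 * (s + 1) ^ (-(5:ℝ)/2))
    (F' := fun v s => ((-(1:ℝ)/2) * (Dc v.1 v.2 s) ^ (-(1:ℝ)/2 - 1)) •
      (s ^ 2 • ContinuousLinearMap.fst ℝ ℝ ℝ + s • ContinuousLinearMap.snd ℝ ℝ ℝ))
    hset ?_ ?_ ?_ ?_ ?_ ?_
  · exact this.differentiableAt
  · exact Filter.Eventually.of_forall fun v => (Dc_rpow_meas _ _ _).aestronglyMeasurable
  · exact int_half he.le hf.le
  · refine AEStronglyMeasurable.smul
      (f := fun s => (-(1:ℝ)/2) * (Dc (e, f).1 (e, f).2 s) ^ (-(1:ℝ)/2 - 1))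
      (g := fun s : ℝ => s ^ 2 • ContinuousLinearMap.fst ℝ ℝ ℝ + s • ContinuousLinearMap.snd ℝ ℝ ℝ)
      ?_ ?_
    · exact ((Dc_rpow_meas _ _ _).const_mul _).aestronglyMeasurable
    · apply Continuous.aestronglyMeasurable; fun_prop
  · filter_upwards [ae_restrict_mem measurableSet_Ioi] with s hs v hv
    have hs : 0 < s := hs
    refine le_trans ?_ (Dc_three_bound hv.1.le hv.2.le hs.le)
    have hp := rpow_nonneg (Dc_pos hv.1.le hv.2.le hs.le).le (-(3:ℝ)/2)
    rw [norm_smul, show -(1:ℝ)/2 - 1 = -(3:ℝ)/2 by norm_num, norm_mul, norm_of_nonneg hp]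
    have h1 : ‖s ^ 2 • ContinuousLinearMap.fst ℝ ℝ ℝ + s • ContinuousLinearMap.snd ℝ ℝ ℝ‖
        ≤ s ^ 2 + s := by
      refine (norm_add_le _ _).trans ?_
      rw [norm_smul, norm_smul, norm_of_nonneg (show 0 ≤ s ^ 2 by positivity), norm_of_nonneg hs.le]
      have a1 := ContinuousLinearMap.norm_fst_le ℝ ℝ ℝ
      have a2 := ContinuousLinearMap.norm_snd_le ℝ ℝ ℝ
      have a3 := mul_le_mul_of_nonneg_left a1 (sq_nonneg s)
      have a4 := mul_le_mul_of_nonneg_left a2 hs.le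
      linarith
    have h2 : ‖-(1:ℝ)/2‖ ≤ 1 := by rw [Real.norm_eq_abs]; norm_num [abs_le]
    calc _ ≤ 1 * (Dc v.1 v.2 s) ^ (-(3:ℝ)/2) * (s ^ 2 + s) := by gcongr
      _ = _ := by ring
  · exact (integrableOn_add_rpow_Ioi_of_lt (a := -(5:ℝ)/2) (m := 1) (c := 0)
      (by norm_num) (by norm_num)).const_mul 8
  · filter_upwards [ae_restrict_mem measurableSet_Ioi] with s hs v hv
    have hs : 0 < s := hs
    have hd : HasFDerivAt (fun v : ℝ × ℝ => Dc v.1 v.2 s)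
        (s ^ 2 • ContinuousLinearMap.fst ℝ ℝ ℝ + s • ContinuousLinearMap.snd ℝ ℝ ℝ) v := by
      have := (((hasFDerivAt_fst (𝕜 := ℝ) (p := v)).mul_const (s ^ 2)).const_add (s ^ 3)).add
        ((hasFDerivAt_snd (𝕜 := ℝ) (p := v)).mul_const s)
      exact this.add_const 1
    exact hd.rpow_const (Or.inl (Dc_pos hv.1.le hv.2.le hs.le).ne')

def Dm (P : Fin 10 → ℝ) : Prop := 0 < P 1 ∧ P 1 < P 0 ∧ (P 0 * P 1)⁻¹ < P 1

lemma memB_facts {a b : ℝ} (h : memB a b) : 0 < b ∧ b < a ∧ (a * b)⁻¹ < b := by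
  obtain ⟨h1, h2, h3⟩ := h
  have hs : 0 < Real.sqrt a := inv_pos.mp h3
  have ha : 0 < a := Real.sqrt_pos.mp hs
  have hb : 0 < b := h3.trans h2
  refine ⟨hb, h1, ?_⟩
  have e : Real.sqrt a * Real.sqrt a = a := Real.mul_self_sqrt ha.le
  have h4 : 1 < b * Real.sqrt a := by
    rwa [inv_lt_iff_one_lt_mul₀ hs] at h2
  rw [inv_lt_iff_one_lt_mul₀ (by positivity)]
  have h5 : b * (a * b) = (b * Real.sqrt a) * (b * Real.sqrt a) := by
    calc b * (a * b) = b * b * a := by ring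
      _ = b * b * (Real.sqrt a * Real.sqrt a) := by rw [e]
      _ = _ := by ring
  rw [h5]; nlinarith

lemma prod_eq_Dc {a b z s : ℝ} (h : a * b * z = 1) : (s + a ^ 2) * (s + b ^ 2) * (s + z ^ 2) =
    Dc (a ^ 2 + b ^ 2 + z ^ 2) (a ^ 2 * b ^ 2 + b ^ 2 * z ^ 2 + a ^ 2 * z ^ 2) s := by
  unfold Dc; linear_combination (a * b * z + 1) * h

/-- The Hamiltonian with the potential rewritten. -/
noncomputable def Hal (g : ℝ) (p : Fin 10 → ℝ) : ℝ :=
  ((p 1 ^ 2 + (p 0 * p 1)⁻¹ ^ 2) * p 0 ^ 2 * p 2 ^ 2 + (p 0 ^ 2 + (p 0 * p 1)⁻¹ ^ 2) * p 1 ^ 2 * p 3 ^ 2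
        - 2 * (p 0 * p 1)⁻¹ * p 2 * p 3) /
      (2 * (p 0 ^ 2 * p 1 ^ 2 + p 0 ^ 2 * (p 0 * p 1)⁻¹ ^ 2 + p 1 ^ 2 * (p 0 * p 1)⁻¹ ^ 2))
    + ((p 0 ^ 2 + p 1 ^ 2) * (p 6 ^ 2 + p 9 ^ 2) + 4 * p 0 * p 1 * p 6 * p 9) /
        (2 * (p 0 ^ 2 - p 1 ^ 2) ^ 2)
    + ((p 0 ^ 2 + (p 0 * p 1)⁻¹ ^ 2) * (p 5 ^ 2 + p 8 ^ 2) + 4 * p 0 * (p 0 * p 1)⁻¹ * p 5 * p 8) /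
        (2 * (p 0 ^ 2 - (p 0 * p 1)⁻¹ ^ 2) ^ 2)
    + ((p 1 ^ 2 + (p 0 * p 1)⁻¹ ^ 2) * (p 4 ^ 2 + p 7 ^ 2) + 4 * p 1 * (p 0 * p 1)⁻¹ * p 4 * p 7) /
        (2 * (p 1 ^ 2 - (p 0 * p 1)⁻¹ ^ 2) ^ 2)
    - 2 * π * g * Iint (p 0 ^ 2 + p 1 ^ 2 + (p 0 * p 1)⁻¹ ^ 2)
        (p 0 ^ 2 * p 1 ^ 2 + p 1 ^ 2 * (p 0 * p 1)⁻¹ ^ 2 + p 0 ^ 2 * (p 0 * p 1)⁻¹ ^ 2)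

lemma Hred_eq (g : ℝ) (p : Fin 10 → ℝ) (h : p 0 * p 1 ≠ 0) : Hred g p = Hal g p := by
  have h1 : p 0 * p 1 * (p 0 * p 1)⁻¹ = 1 := mul_inv_cancel₀ h
  simp only [Hred, Hal, Iint, prod_eq_Dc h1]

lemma Dm.facts {P : Fin 10 → ℝ} (h : Dm P) : 0 < P 0 ∧ 0 < P 1 ∧ 0 < (P 0 * P 1)⁻¹ ∧
    0 < P 0 ^ 2 - P 1 ^ 2 ∧ 0 < P 0 ^ 2 - (P 0 * P 1)⁻¹ ^ 2 ∧ 0 < P 1 ^ 2 - (P 0 * P 1)⁻¹ ^ 2 := by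
  obtain ⟨h1, h2, h3⟩ := h
  have h0 : 0 < P 0 := h1.trans h2
  have h4 : 0 < (P 0 * P 1)⁻¹ := by positivity
  refine ⟨h0, h1, h4, ?_, ?_, ?_⟩ <;> nlinarith

lemma Hred_diff (g : ℝ) (P : Fin 10 → ℝ) (h : Dm P) : DifferentiableAt ℝ (Hred g) P := by
  obtain ⟨h0, h1, h2, h3, h4, h5⟩ := h.facts
  have h01 : P 0 * P 1 ≠ 0 := by positivity
  have hev : Hred g =ᶠ[nhds P] Hal g := by
    have hc : ContinuousAt (fun P : Fin 10 → ℝ => P 0 * P 1) P := by fun_prop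
    filter_upwards [hc.eventually_ne h01] with p hp using Hred_eq g p hp
  refine DifferentiableAt.congr_of_eventuallyEq ?_ hev
  have hz : DifferentiableAt ℝ (fun p : Fin 10 → ℝ => (p 0 * p 1)⁻¹) P := by
    exact DifferentiableAt.fun_inv (by fun_prop) h01
  have hI : DifferentiableAt ℝ (fun p : Fin 10 → ℝ => Iint (p 0 ^ 2 + p 1 ^ 2 + (p 0 * p 1)⁻¹ ^ 2)
        (p 0 ^ 2 * p 1 ^ 2 + p 1 ^ 2 * (p 0 * p 1)⁻¹ ^ 2 + p 0 ^ 2 * (p 0 * p 1)⁻¹ ^ 2)) P := by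
    have hi := Iint_diff (e := P 0 ^ 2 + P 1 ^ 2 + (P 0 * P 1)⁻¹ ^ 2)
      (f := P 0 ^ 2 * P 1 ^ 2 + P 1 ^ 2 * (P 0 * P 1)⁻¹ ^ 2 + P 0 ^ 2 * (P 0 * P 1)⁻¹ ^ 2)
      (by positivity) (by positivity)
    exact DifferentiableAt.comp (g := fun v : ℝ × ℝ => Iint v.1 v.2)
      (f := fun p : Fin 10 → ℝ => (p 0 ^ 2 + p 1 ^ 2 + (p 0 * p 1)⁻¹ ^ 2,
        p 0 ^ 2 * p 1 ^ 2 + p 1 ^ 2 * (p 0 * p 1)⁻¹ ^ 2 + p 0 ^ 2 * (p 0 * p 1)⁻¹ ^ 2)) P hi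
      (by fun_prop)
  have hdiv : ∀ {u v : (Fin 10 → ℝ) → ℝ}, DifferentiableAt ℝ u P → DifferentiableAt ℝ v P → v P ≠ 0 →
      DifferentiableAt ℝ (fun p => u p / v p) P := by
    intro u v hu hv h
    simp only [div_eq_mul_inv]
    exact hu.fun_mul (hv.fun_inv h)
  unfold Hal
  refine DifferentiableAt.sub (DifferentiableAt.add (DifferentiableAt.add (DifferentiableAt.add
    (hdiv ?_ ?_ ?_) (hdiv ?_ ?_ ?_)) (hdiv ?_ ?_ ?_))
    (hdiv ?_ ?_ ?_)) (hI.const_mul _)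
  all_goals first | fun_prop | positivity

lemma Om_nhds {a z : ℝ} (hz : 0 < z) (hza : z < a) (h1 : z ^ 2 < ((a * z)⁻¹) ^ 2)
    (h2 : ((a * z)⁻¹) ^ 2 < 4 * z ^ 2) (h3 : ((a * z)⁻¹) ^ 2 < a ^ 2) :
    ∀ᶠ v : ℝ × ℝ in nhds (((a - z) ^ 2)⁻¹, ((a + z) ^ 2)⁻¹), Om v.1 v.2 := by
  have ha : 0 < a := hz.trans hza
  have hx0 : 0 < a - z := by linarith
  have hy0 : 0 < a + z := by linarith
  set v0 : ℝ × ℝ := (((a - z) ^ 2)⁻¹, ((a + z) ^ 2)⁻¹) with hv0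
  have s1 : (Real.sqrt v0.1)⁻¹ = a - z := by
    simp only [hv0, Real.sqrt_inv, Real.sqrt_sq hx0.le, inv_inv]
  have s2 : (Real.sqrt v0.2)⁻¹ = a + z := by
    simp only [hv0, Real.sqrt_inv, Real.sqrt_sq hy0.le, inv_inv]
  have p1 : 0 < v0.1 := by simp only [hv0]; positivity
  have p2 : 0 < v0.2 := by simp only [hv0]; positivity
  have c1 : ContinuousAt (fun v : ℝ × ℝ => (Real.sqrt v.1)⁻¹) v0 := by
    exact ContinuousAt.inv₀ (f := fun v : ℝ × ℝ => Real.sqrt v.1) (by fun_prop) (Real.sqrt_pos.mpr p1).ne'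
  have c2 : ContinuousAt (fun v : ℝ × ℝ => (Real.sqrt v.2)⁻¹) v0 := by
    exact ContinuousAt.inv₀ (f := fun v : ℝ × ℝ => Real.sqrt v.2) (by fun_prop) (Real.sqrt_pos.mpr p2).ne'
  let A : ℝ × ℝ → ℝ := fun v => ((Real.sqrt v.1)⁻¹ + (Real.sqrt v.2)⁻¹) / 2
  let Z : ℝ × ℝ → ℝ := fun v => ((Real.sqrt v.2)⁻¹ - (Real.sqrt v.1)⁻¹) / 2
  have cA : ContinuousAt A v0 := (c1.add c2).div_const 2
  have cZ : ContinuousAt Z v0 := (c2.sub c1).div_const 2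
  have eA : A v0 = a := by simp only [A, s1, s2]; ring
  have eZ : Z v0 = z := by simp only [Z, s1, s2]; ring
  have cY : ContinuousAt (fun v => ((A v * Z v)⁻¹) ^ 2) v0 := by
    refine ContinuousAt.pow (ContinuousAt.inv₀ (cA.mul cZ) ?_) 2
    show A v0 * Z v0 ≠ 0
    rw [eA, eZ]; positivity
  have eY : ((A v0 * Z v0)⁻¹) ^ 2 = ((a * z)⁻¹) ^ 2 := by rw [eA, eZ]
  filter_upwards [continuousAt_fst.eventually (lt_mem_nhds p1),
    continuousAt_snd.eventually (lt_mem_nhds p2),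
    ContinuousAt.eventually_lt continuousAt_const cZ (by rw [eZ]; exact hz),
    ContinuousAt.eventually_lt cZ cA (by rw [eA, eZ]; exact hza),
    ContinuousAt.eventually_lt (cZ.pow 2) cY (by simpa only [Pi.pow_apply, eA, eZ] using h1),
    ContinuousAt.eventually_lt cY ((cZ.pow 2).const_mul 4) (by simpa only [Pi.pow_apply, eA, eZ] using h2),
    ContinuousAt.eventually_lt cY (cA.pow 2) (by simpa only [Pi.pow_apply, eA, eZ] using h3)]
    with v k1 k2 k3 k4 k5 k6 k7
  refine ⟨A v, Z v, k3, k4, ?_, ?_, k5.le, k6.le, k7.le⟩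
  · have : A v - Z v = (Real.sqrt v.1)⁻¹ := by simp only [A, Z]; ring
    rw [this, inv_pow, inv_inv, Real.sq_sqrt k1.le]
  · have : A v + Z v = (Real.sqrt v.2)⁻¹ := by simp only [A, Z]; ring
    rw [this, inv_pow, inv_inv, Real.sq_sqrt k2.le]

/-- The coordinates in which the potential is convex. -/
noncomputable def pP (P : Fin 10 → ℝ) : ℝ := ((P 0 - (P 0 * P 1)⁻¹) ^ 2)⁻¹
noncomputable def qP (P : Fin 10 → ℝ) : ℝ := ((P 0 + (P 0 * P 1)⁻¹) ^ 2)⁻¹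

lemma E_pq {P : Fin 10 → ℝ} (h : Dm P) :
    rE1 (pP P) (qP P) = P 0 ^ 2 + P 1 ^ 2 + (P 0 * P 1)⁻¹ ^ 2 ∧
    rE2 (pP P) (qP P) = P 0 ^ 2 * P 1 ^ 2 + P 1 ^ 2 * (P 0 * P 1)⁻¹ ^ 2 + P 0 ^ 2 * (P 0 * P 1)⁻¹ ^ 2 := by
  obtain ⟨h0, h1, -⟩ := h.facts
  unfold rE1 rE2 pP qP
  rw [rS_az, rR_az]
  constructor <;> field_simp <;> ring

lemma kin_pos {a b c d z : ℝ} (ha : 0 < a) (hb : 0 < b) (hz : z = (a * b)⁻¹) :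
    a ^ 2 * b ^ 2 * (c ^ 2 + d ^ 2) ≤
      (b ^ 2 + z ^ 2) * a ^ 2 * c ^ 2 + (a ^ 2 + z ^ 2) * b ^ 2 * d ^ 2 - 2 * z * c * d := by
  have h : a * b * z = 1 := by rw [hz]; field_simp
  have : 0 ≤ z ^ 2 * (a * c - b * d) ^ 2 := by positivity
  have e : 2 * z * c * d = 2 * z ^ 2 * (a * c) * (b * d) := by
    linear_combination (-2 * z * c * d) * h
  rw [e]; nlinarith

lemma A_ineq {X Y Z : ℝ} (hZ : 0 < Z) (hY : 0 < Y - Z) (hX : 0 < X - Y) :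
    (X + Z) / (X - Z) ^ 2 < (X + Y) / (X - Y) ^ 2 ∧
    (X + Z) / (X - Z) ^ 2 < (Y + Z) / (Y - Z) ^ 2 := by
  have hXZ : 0 < X - Z := by linarith
  constructor
  · apply div_lt_div₀ (by linarith) _ (by linarith) (by positivity)
    apply pow_le_pow_left₀ hX.le; linarith
  · rw [div_lt_div_iff₀ (by positivity) (by positivity)]
    have : (Y + Z) * (X - Z) ^ 2 - (X + Z) * (Y - Z) ^ 2 = (X - Y) * (X * Y + Z * (X + Y) - 3 * Z ^ 2) := by ring
    have h2 : 0 < X * Y + Z * (X + Y) - 3 * Z ^ 2 := by nlinarith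
    nlinarith [mul_pos hX h2]

lemma quad_aux {a b z c d K D m1 m2 m3 N2 : ℝ} (hz : 0 < z) (hb : 0 < b) (ha : 0 < a)
    (hab : 0 < a ^ 2 - b ^ 2) (haz : 0 < a ^ 2 - z ^ 2) (hbz : 0 < b ^ 2 - z ^ 2)
    (hK : a ^ 2 * b ^ 2 * (c ^ 2 + d ^ 2) ≤ K) (hD : 0 < D)
    (hN : N2 ≤ m1 ^ 2 + m2 ^ 2 + m3 ^ 2) :
    N2 / 4 * (((a - z) ^ 2)⁻¹ + ((a + z) ^ 2)⁻¹) ≤ K / (2 * D)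
      + ((a ^ 2 + b ^ 2) * (m3 ^ 2 + 0 ^ 2) + 4 * a * b * m3 * 0) / (2 * (a ^ 2 - b ^ 2) ^ 2)
      + ((a ^ 2 + z ^ 2) * (m2 ^ 2 + 0 ^ 2) + 4 * a * z * m2 * 0) / (2 * (a ^ 2 - z ^ 2) ^ 2)
      + ((b ^ 2 + z ^ 2) * (m1 ^ 2 + 0 ^ 2) + 4 * b * z * m1 * 0) / (2 * (b ^ 2 - z ^ 2) ^ 2) ∧
    (K / (2 * D)
      + ((a ^ 2 + b ^ 2) * (m3 ^ 2 + 0 ^ 2) + 4 * a * b * m3 * 0) / (2 * (a ^ 2 - b ^ 2) ^ 2)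
      + ((a ^ 2 + z ^ 2) * (m2 ^ 2 + 0 ^ 2) + 4 * a * z * m2 * 0) / (2 * (a ^ 2 - z ^ 2) ^ 2)
      + ((b ^ 2 + z ^ 2) * (m1 ^ 2 + 0 ^ 2) + 4 * b * z * m1 * 0) / (2 * (b ^ 2 - z ^ 2) ^ 2)
      ≤ N2 / 4 * (((a - z) ^ 2)⁻¹ + ((a + z) ^ 2)⁻¹) → c = 0 ∧ d = 0 ∧ m1 = 0 ∧ m3 = 0) := by
  obtain ⟨i1, i2⟩ := A_ineq (X := a ^ 2) (Y := b ^ 2) (Z := z ^ 2) (by positivity) hbz hab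
  have h1 : 0 < a - z := by nlinarith
  have hp : ((a - z) ^ 2)⁻¹ + ((a + z) ^ 2)⁻¹ = 2 * ((a ^ 2 + z ^ 2) / (a ^ 2 - z ^ 2) ^ 2) := by
    have : (a ^ 2 - z ^ 2) ^ 2 = (a - z) ^ 2 * (a + z) ^ 2 := by ring
    rw [this]; field_simp; ring
  have e1 : ((a ^ 2 + b ^ 2) * (m3 ^ 2 + 0 ^ 2) + 4 * a * b * m3 * 0) / (2 * (a ^ 2 - b ^ 2) ^ 2)
    = (a ^ 2 + b ^ 2) / (a ^ 2 - b ^ 2) ^ 2 * (m3 ^ 2 / 2) := by field_simp; ring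
  have e2 : ((a ^ 2 + z ^ 2) * (m2 ^ 2 + 0 ^ 2) + 4 * a * z * m2 * 0) / (2 * (a ^ 2 - z ^ 2) ^ 2)
    = (a ^ 2 + z ^ 2) / (a ^ 2 - z ^ 2) ^ 2 * (m2 ^ 2 / 2) := by field_simp; ring
  have e3 : ((b ^ 2 + z ^ 2) * (m1 ^ 2 + 0 ^ 2) + 4 * b * z * m1 * 0) / (2 * (b ^ 2 - z ^ 2) ^ 2)
    = (b ^ 2 + z ^ 2) / (b ^ 2 - z ^ 2) ^ 2 * (m1 ^ 2 / 2) := by field_simp; ring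
  have hA : 0 < (a ^ 2 + z ^ 2) / (a ^ 2 - z ^ 2) ^ 2 := by positivity
  rw [hp, e1, e2, e3]
  generalize (a ^ 2 + z ^ 2) / (a ^ 2 - z ^ 2) ^ 2 = A at *
  generalize (a ^ 2 + b ^ 2) / (a ^ 2 - b ^ 2) ^ 2 = A' at *
  generalize (b ^ 2 + z ^ 2) / (b ^ 2 - z ^ 2) ^ 2 = A'' at *
  have k0 : a ^ 2 * b ^ 2 / (2 * D) * (c ^ 2 + d ^ 2) ≤ K / (2 * D) := by
    rw [div_mul_eq_mul_div]; gcongr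
  have k1 : 0 < a ^ 2 * b ^ 2 / (2 * D) := by positivity
  generalize a ^ 2 * b ^ 2 / (2 * D) = L at *
  generalize K / (2 * D) = K' at *
  have t1 : 0 ≤ L * c ^ 2 := by positivity
  have t2 : 0 ≤ L * d ^ 2 := by positivity
  have t3 : 0 ≤ (A' - A) * m3 ^ 2 := mul_nonneg (by linarith) (sq_nonneg _)
  have t4 : 0 ≤ (A'' - A) * m1 ^ 2 := mul_nonneg (by linarith) (sq_nonneg _)
  have t5 : 0 ≤ A * (m1 ^ 2 + m2 ^ 2 + m3 ^ 2 - N2) := mul_nonneg hA.le (by linarith)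
  have key : K' + A' * (m3 ^ 2 / 2) + A * (m2 ^ 2 / 2) + A'' * (m1 ^ 2 / 2) - N2 / 4 * (2 * A) =
      (K' - L * (c ^ 2 + d ^ 2)) + L * c ^ 2 + L * d ^ 2 + (A' - A) * m3 ^ 2 / 2
      + (A'' - A) * m1 ^ 2 / 2 + A * (m1 ^ 2 + m2 ^ 2 + m3 ^ 2 - N2) / 2 := by ring
  refine ⟨by linarith, fun h => ?_⟩
  have z1 : L * c ^ 2 = 0 := by linarith
  have z2 : L * d ^ 2 = 0 := by linarith
  have z3 : (A' - A) * m3 ^ 2 = 0 := by linarith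
  have z4 : (A'' - A) * m1 ^ 2 = 0 := by linarith
  have n3 : A' - A ≠ 0 := (sub_pos.mpr i1).ne'
  have n4 : A'' - A ≠ 0 := (sub_pos.mpr i2).ne'
  exact ⟨by simpa [k1.ne'] using z1, by simpa [k1.ne'] using z2, by simpa [n4] using z4,
    by simpa [n3] using z3⟩

lemma H_lower {g N2 : ℝ} {P : Fin 10 → ℝ} (h : Dm P) (h7 : P 7 = 0) (h8 : P 8 = 0) (h9 : P 9 = 0)
    (hN : N2 ≤ P 4 ^ 2 + P 5 ^ 2 + P 6 ^ 2) :
    N2 / 4 * (pP P + qP P) - 2 * π * g * Iint (rE1 (pP P) (qP P)) (rE2 (pP P) (qP P)) ≤ Hred g P ∧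
    (Hred g P ≤ N2 / 4 * (pP P + qP P) - 2 * π * g * Iint (rE1 (pP P) (qP P)) (rE2 (pP P) (qP P)) →
      P 2 = 0 ∧ P 3 = 0 ∧ P 4 = 0 ∧ P 6 = 0) := by
  obtain ⟨h0, h1, h2, h3, h4, h5⟩ := h.facts
  rw [Hred_eq g P (by positivity), (E_pq h).1, (E_pq h).2]
  have kp := kin_pos (c := P 2) (d := P 3) h0 h1 rfl
  unfold Hal pP qP
  rw [h7, h8, h9, sub_le_sub_iff_right, sub_le_sub_iff_right]
  exact quad_aux h2 h1 h0 h3 h4 h5 kp (by positivity) hN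

lemma H_value {g N : ℝ} {a b : ℝ} (h : Dm ![a, b, 0, 0, 0, N, 0, 0, 0, 0]) :
    Hred g ![a, b, 0, 0, 0, N, 0, 0, 0, 0] = N ^ 2 / 4 *
      (pP ![a, b, 0, 0, 0, N, 0, 0, 0, 0] + qP ![a, b, 0, 0, 0, N, 0, 0, 0, 0]) - 2 * π * g *
      Iint (rE1 (pP ![a, b, 0, 0, 0, N, 0, 0, 0, 0]) (qP ![a, b, 0, 0, 0, N, 0, 0, 0, 0]))
       (rE2 (pP ![a, b, 0, 0, 0, N, 0, 0, 0, 0]) (qP ![a, b, 0, 0, 0, N, 0, 0, 0, 0])) := by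
  obtain ⟨h0, h1, h2, h3, h4, h5⟩ := h.facts
  rw [Hred_eq g _ (by positivity), (E_pq h).1, (E_pq h).2]
  unfold Hal pP qP
  simp only [Matrix.cons_val] at *
  generalize (a * b)⁻¹ = z at *
  have h6 : 0 < a - z := by nlinarith
  have hp : ((a - z) ^ 2)⁻¹ + ((a + z) ^ 2)⁻¹ = 2 * ((a ^ 2 + z ^ 2) / (a ^ 2 - z ^ 2) ^ 2) := by
    have : (a ^ 2 - z ^ 2) ^ 2 = (a - z) ^ 2 * (a + z) ^ 2 := by ring
    rw [this]; field_simp; ring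
  rw [hp]
  congr 1
  simp
  field_simp; ring

lemma crit_poly {a z Y : ℝ} (hY : a * z * Y = 1) (x y c1 c2 G : ℝ)
    (hp : (a - z) ^ 4 / (a * z) * ((a * Y ^ 2 * z + (a ^ 2 * Y ^ 2 - a ^ 2 * z ^ 2 + Y ^ 2 * z ^ 2)) * c1
      + (a * z + Y ^ 2) * c2) = G)
    (hm : (a + z) ^ 4 / (a * z) * ((a * Y ^ 2 * z - (a ^ 2 * Y ^ 2 - a ^ 2 * z ^ 2 + Y ^ 2 * z ^ 2)) * c1
      + (a * z - Y ^ 2) * c2) = G) :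
    1 / 2 * (rE11 ((a - z) ^ 2)⁻¹ ((a + z) ^ 2)⁻¹ x y * c2 + rE21 ((a - z) ^ 2)⁻¹ ((a + z) ^ 2)⁻¹ x y * c1)
      = - (G / 4) * (x + y) := by
  have hYe : (a * z)⁻¹ = Y := inv_eq_of_mul_eq_one_right hY
  unfold rE11 rE21
  rw [rS_az, rR_az, hYe]
  have ei : (a - z) ^ 4 / (a * z) = (a - z) ^ 4 * Y := by rw [div_eq_mul_inv, hYe]
  have ej : (a + z) ^ 4 / (a * z) = (a + z) ^ 4 * Y := by rw [div_eq_mul_inv, hYe]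
  rw [ei] at hp; rw [ej] at hm
  unfold rS1 rR1
  simp only [inv_inv]
  linear_combination (-(x / 4)) * hp - (y / 4) * hm + ((a - z) ^ 4 * x / 4 * (c2 + (Y ^ 2 - a * z) * c1)
    + (a + z) ^ 4 * y / 4 * (c2 + (Y ^ 2 + a * z) * c1)) * hY

lemma Y_lt {a z Y c1 c2 : ℝ} (hz : 0 < z) (hzY : z < Y) (hYa : Y < a) (h1 : 0 < c1) (h2 : 0 < c2)
    (h : (a - z) ^ 4 / (a * z) * ((a * Y ^ 2 * z + (a ^ 2 * Y ^ 2 - a ^ 2 * z ^ 2 + Y ^ 2 * z ^ 2)) * c1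
      + (a * z + Y ^ 2) * c2) = (a + z) ^ 4 / (a * z) * ((a * Y ^ 2 * z - (a ^ 2 * Y ^ 2 - a ^ 2 * z ^ 2 + Y ^ 2 * z ^ 2)) * c1
      + (a * z - Y ^ 2) * c2)) : Y ^ 2 < 4 * z ^ 2 := by
  by_contra hc
  push Not at hc
  have ha : 0 < a := by linarith
  have hid : c1 * ((a ^ 2 + z ^ 2) ^ 3 * Y ^ 2 - a ^ 2 * z ^ 2 * (a ^ 4 + 6 * a ^ 2 * z ^ 2 + z ^ 4))
    + c2 * ((a ^ 4 + 6 * a ^ 2 * z ^ 2 + z ^ 4) * Y ^ 2 - 4 * a ^ 2 * z ^ 2 * (a ^ 2 + z ^ 2)) = 0 := by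
    field_simp at h
    linear_combination (1 / 2) * h
  have hX : 4 * z ^ 2 < a ^ 2 := by nlinarith
  have p1 : 0 < (a ^ 2 + z ^ 2) ^ 3 * Y ^ 2 - a ^ 2 * z ^ 2 * (a ^ 4 + 6 * a ^ 2 * z ^ 2 + z ^ 4) := by
    have k1 : 0 ≤ (a ^ 2 + z ^ 2) ^ 3 * (Y ^ 2 - 4 * z ^ 2) := mul_nonneg (by positivity) (by linarith)
    have k2 : 0 < z ^ 2 * (3 * a ^ 6 + 6 * a ^ 4 * z ^ 2 + 11 * a ^ 2 * z ^ 4 + 4 * z ^ 6) := by positivity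
    linarith
  have p2 : 0 < (a ^ 4 + 6 * a ^ 2 * z ^ 2 + z ^ 4) * Y ^ 2 - 4 * a ^ 2 * z ^ 2 * (a ^ 2 + z ^ 2) := by
    have k1 : 0 ≤ (a ^ 4 + 6 * a ^ 2 * z ^ 2 + z ^ 4) * (Y ^ 2 - 4 * z ^ 2) := mul_nonneg (by positivity) (by linarith)
    have k2 : 0 < 4 * z ^ 2 * (5 * a ^ 2 * z ^ 2 + z ^ 4) := by positivity
    linarith
  have := mul_pos h1 p1
  have := mul_pos h2 p2
  linarith

/-- The lower bound for the energy in the convexity coordinates. -/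
noncomputable def Phi (g G p q : ℝ) : ℝ := G / 4 * (p + q) - 2 * π * g * Iint (rE1 p q) (rE2 p q)

lemma Phi_min {g b1 b2 b3 : ℝ} (hg : 0 < g) (hB : memB b1 b2) (hb3 : b3 = (b1 * b2)⁻¹)
    (heq : GSp g b1 b2 b3 = GSm g b1 b2 b3) :
    ∀ᶠ v : ℝ × ℝ in nhds (((b1 - b3) ^ 2)⁻¹, ((b1 + b3) ^ 2)⁻¹),
      v ≠ (((b1 - b3) ^ 2)⁻¹, ((b1 + b3) ^ 2)⁻¹) →
      Phi g (GSp g b1 b2 b3) ((b1 - b3) ^ 2)⁻¹ ((b1 + b3) ^ 2)⁻¹ < Phi g (GSp g b1 b2 b3) v.1 v.2 := by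
  obtain ⟨h1, h2, h3⟩ := memB_facts hB
  have h0 : 0 < b1 := h1.trans h2
  have hz : 0 < b3 := by rw [hb3]; positivity
  rw [← hb3] at h3
  have hY : b1 * b2 * b3 = 1 := by rw [hb3]; field_simp
  have hY' : b1 * b3 * b2 = 1 := by linarith
  have hYe : (b1 * b3)⁻¹ = b2 := inv_eq_of_mul_eq_one_right hY'
  have hza : b3 < b1 := h3.trans h2
  have e1 : rE1 ((b1 - b3) ^ 2)⁻¹ ((b1 + b3) ^ 2)⁻¹ = b1 ^ 2 + b2 ^ 2 + b3 ^ 2 := by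
    unfold rE1; rw [rS_az, rR_az, hYe]; ring
  have e2 : rE2 ((b1 - b3) ^ 2)⁻¹ ((b1 + b3) ^ 2)⁻¹ =
      b1 ^ 2 * b2 ^ 2 + b2 ^ 2 * b3 ^ 2 + b1 ^ 2 * b3 ^ 2 := by
    unfold rE2; rw [rS_az, rR_az, hYe]; ring
  have hc1 : riC1 g b1 b2 b3 = 2 * π * g *
      J1 (rE1 ((b1 - b3) ^ 2)⁻¹ ((b1 + b3) ^ 2)⁻¹) (rE2 ((b1 - b3) ^ 2)⁻¹ ((b1 + b3) ^ 2)⁻¹) := by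
    rw [e1, e2]; simp only [riC1, J1, prod_eq_Dc hY]
  have hc2 : riC2 g b1 b2 b3 = 2 * π * g *
      J2 (rE1 ((b1 - b3) ^ 2)⁻¹ ((b1 + b3) ^ 2)⁻¹) (rE2 ((b1 - b3) ^ 2)⁻¹ ((b1 + b3) ^ 2)⁻¹) := by
    rw [e1, e2]; simp only [riC2, J2, prod_eq_Dc hY]
  have hpg : 0 < 2 * π * g := by positivity
  have p1 : 0 < riC1 g b1 b2 b3 := by
    rw [hc1, e1, e2]; exact mul_pos hpg (J1_pos (by positivity) (by positivity))
  have p2 : 0 < riC2 g b1 b2 b3 := by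
    rw [hc2, e1, e2]; exact mul_pos hpg (J2_pos (by positivity) (by positivity))
  have hlt : b2 ^ 2 < 4 * b3 ^ 2 := Y_lt hz h3 h2 p1 p2 heq
  have hO := Om_nhds hz hza (by rw [hYe]; nlinarith) (by rw [hYe]; exact hlt) (by rw [hYe]; nlinarith)
  obtain ⟨r, hr, hball⟩ := Metric.eventually_nhds_iff_ball.mp hO
  have hc := fun x y => crit_poly hY' x y (riC1 g b1 b2 b3) (riC2 g b1 b2 b3) (GSp g b1 b2 b3) rfl heq.symm
  rw [hc1, hc2] at hc
  set p0 := ((b1 - b3) ^ 2)⁻¹ with hp0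
  set q0 := ((b1 + b3) ^ 2)⁻¹ with hq0
  refine Metric.eventually_nhds_iff_ball.mpr ⟨r, hr, fun v hv hne => ?_⟩
  have hxy : ¬ (v.1 - p0 = 0 ∧ v.2 - q0 = 0) := by
    rintro ⟨k1, k2⟩
    exact hne (Prod.ext (by simp; linarith) (by simp; linarith))
  have key := integrated_tangent p0 q0 (v.1 - p0) (v.2 - q0) hxy (by
    intro t ht
    have hm : ((1 - t) • (p0, q0) + t • v : ℝ × ℝ) ∈ Metric.ball (p0, q0) r :=
      (convex_ball (p0, q0) r) (Metric.mem_ball_self hr) hv (by linarith [ht.2]) ht.1 (by ring)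
    have := hball _ hm
    simp only [Prod.fst_add, Prod.snd_add, Prod.smul_fst, Prod.smul_snd, smul_eq_mul] at this
    convert this using 1 <;> ring)
  rw [add_sub_cancel, add_sub_cancel] at key
  have hcc := hc (v.1 - p0) (v.2 - q0)
  unfold Phi
  have := mul_lt_mul_of_pos_left key hpg
  nlinarith

lemma Dm_open (P : Fin 10 → ℝ) (h : Dm P) : ∀ᶠ Q in nhds P, Dm Q := by
  obtain ⟨h1, h2, h3⟩ := h
  have hc : ContinuousAt (fun P : Fin 10 → ℝ => (P 0 * P 1)⁻¹) P :=
    ContinuousAt.inv₀ (f := fun P : Fin 10 → ℝ => P 0 * P 1) (by fun_prop) (mul_pos (h1.trans h2) h1).ne'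
  have hc0 : ContinuousAt (fun P : Fin 10 → ℝ => P 0) P := continuousAt_apply 0 P
  have hc1 : ContinuousAt (fun P : Fin 10 → ℝ => P 1) P := continuousAt_apply 1 P
  filter_upwards [ContinuousAt.eventually_lt continuousAt_const hc1 h1,
    ContinuousAt.eventually_lt hc1 hc0 h2, ContinuousAt.eventually_lt hc hc1 h3] with Q k1 k2 k3
  exact ⟨k1, k2, k3⟩

lemma pq_cont (P : Fin 10 → ℝ) (h : Dm P) : ContinuousAt (fun P => (pP P, qP P)) P := by
  obtain ⟨h0, h1, h2, h3, h4, h5⟩ := h.facts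
  have hc : ContinuousAt (fun P : Fin 10 → ℝ => (P 0 * P 1)⁻¹) P :=
    ContinuousAt.inv₀ (f := fun P : Fin 10 → ℝ => P 0 * P 1) (by fun_prop) (mul_pos h0 h1).ne'
  have h6 : 0 < P 0 - (P 0 * P 1)⁻¹ := by nlinarith
  refine ContinuousAt.prodMk ?_ ?_
  · exact ContinuousAt.inv₀ (f := fun P : Fin 10 → ℝ => (P 0 - (P 0 * P 1)⁻¹) ^ 2)
      (((continuousAt_apply 0 P).sub hc).pow 2) (by positivity)
  · exact ContinuousAt.inv₀ (f := fun P : Fin 10 → ℝ => (P 0 + (P 0 * P 1)⁻¹) ^ 2)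
      (((continuousAt_apply 0 P).add hc).pow 2) (by positivity)

lemma pq_inj {P Q : Fin 10 → ℝ} (h : Dm P) (h' : Dm Q) (hp : pP P = pP Q) (hq : qP P = qP Q) :
    P 0 = Q 0 ∧ P 1 = Q 1 := by
  obtain ⟨h0, h1, h2, h3, h4, h5⟩ := h.facts
  obtain ⟨k0, k1, k2, k3, k4, k5⟩ := h'.facts
  have h6 : 0 < P 0 - (P 0 * P 1)⁻¹ := by nlinarith
  have k6 : 0 < Q 0 - (Q 0 * Q 1)⁻¹ := by nlinarith
  unfold pP at hp; unfold qP at hq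
  have a1 := (sq_eq_sq₀ h6.le k6.le).mp (inv_injective hp)
  have a2 := (sq_eq_sq₀ (by positivity) (by positivity)).mp (inv_injective hq)
  have a3 : P 0 = Q 0 := by linarith
  refine ⟨a3, ?_⟩
  have a4 : (P 0 * P 1)⁻¹ = (Q 0 * Q 1)⁻¹ := by linarith
  have a5 := inv_injective a4
  rw [a3] at a5
  exact mul_left_cancel₀ k0.ne' a5

lemma local_min {g b1 b2 b3 : ℝ} (hg : 0 < g) (hB : memB b1 b2) (hb3 : b3 = (b1 * b2)⁻¹)
    (heq : GSp g b1 b2 b3 = GSm g b1 b2 b3) (hpos : 0 < GSp g b1 b2 b3) (Ps : Fin 10 → ℝ)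
    (hPs : Ps = ![b1, b2, 0, 0, 0, Real.sqrt (GSp g b1 b2 b3), 0, 0, 0, 0]) :
    ∀ᶠ P in nhds Ps, Dm P ∧ (P 7 = 0 → P 8 = 0 → P 9 = 0 →
      GSp g b1 b2 b3 ≤ P 4 ^ 2 + P 5 ^ 2 + P 6 ^ 2 → 
      Hred g Ps ≤ Hred g P ∧ (Hred g P ≤ Hred g Ps →
        P 0 = b1 ∧ P 1 = b2 ∧ P 2 = 0 ∧ P 3 = 0 ∧ P 4 = 0 ∧ P 6 = 0)) := by
  have hD : Dm Ps := by rw [hPs]; exact memB_facts hB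
  have hv : Hred g Ps = Phi g (GSp g b1 b2 b3) (pP Ps) (qP Ps) := by
    rw [hPs] at hD ⊢
    rw [H_value hD, Phi, Real.sq_sqrt hpos.le]
  have hp0 : pP Ps = ((b1 - b3) ^ 2)⁻¹ := by rw [hPs, hb3]; rfl
  have hq0 : qP Ps = ((b1 + b3) ^ 2)⁻¹ := by rw [hPs, hb3]; rfl
  have hmin := Phi_min hg hB hb3 heq
  rw [← hp0, ← hq0] at hmin
  filter_upwards [Dm_open Ps hD, (pq_cont Ps hD).eventually hmin] with P hP hm
  refine ⟨hP, fun h7 h8 h9 hN => ?_⟩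
  obtain ⟨l1, l2⟩ := H_lower (g := g) hP h7 h8 h9 hN
  have hle : Hred g Ps ≤ Phi g (GSp g b1 b2 b3) (pP P) (qP P) := by
    by_cases hne : (pP P, qP P) = (pP Ps, qP Ps)
    · rw [Prod.mk.injEq] at hne
      rw [hne.1, hne.2, hv]
    · rw [hv]; exact (hm hne).le
  refine ⟨hle.trans l1, fun hH => ?_⟩
  obtain ⟨r2, r3, r4, r6⟩ := l2 (hH.trans hle)
  have hpq : (pP P, qP P) = (pP Ps, qP Ps) := by
    by_contra hne
    have := hm hne
    unfold Phi at this hv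
    linarith
  rw [Prod.mk.injEq] at hpq
  obtain ⟨r0, r1⟩ := pq_inj hP hD hpq.1 hpq.2
  refine ⟨?_, ?_, r2, r3, r4, r6⟩
  · rw [r0, hPs]; rfl
  · rw [r1, hPs]; rfl

lemma const_on {f : ℝ → ℝ} {s : Set ℝ} (hs : s.OrdConnected) (h : ∀ t ∈ s, HasDerivAt f 0 t)
    {x y : ℝ} (hx : x ∈ s) (hy : y ∈ s) : f y = f x := by
  have := Convex.norm_image_sub_le_of_norm_hasDerivWithin_le (f := f) (f' := fun _ => 0) (C := 0)
    (fun t ht => (h t ht).hasDerivWithinAt) (fun t _ => by simp) hs.convex hx hy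
  rw [zero_mul, norm_le_zero_iff, sub_eq_zero] at this
  exact this

lemma right_const {g : ℝ} {s : Set ℝ} (hs : s.OrdConnected) {γ : ℝ → Fin 10 → ℝ}
    (hγ : IsSolution g γ s) {x y : ℝ} (hx : x ∈ s) (hy : y ∈ s) :
    γ y 7 ^ 2 + γ y 8 ^ 2 + γ y 9 ^ 2 = γ x 7 ^ 2 + γ x 8 ^ 2 + γ x 9 ^ 2 := by
  refine const_on (f := fun t => γ t 7 ^ 2 + γ t 8 ^ 2 + γ t 9 ^ 2) hs (fun t ht => ?_) hx hy
  obtain ⟨-, hd⟩ := hγ t ht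
  have := (((hd 7).fun_pow 2).fun_add ((hd 8).fun_pow 2)).fun_add ((hd 9).fun_pow 2)
  refine this.congr_deriv ?_
  simp only [RVF, Matrix.cons_val]
  push_cast
  ring

lemma left_const {g : ℝ} {s : Set ℝ} (hs : s.OrdConnected) {γ : ℝ → Fin 10 → ℝ}
    (hγ : IsSolution g γ s) {x y : ℝ} (hx : x ∈ s) (hy : y ∈ s) :
    γ y 4 ^ 2 + γ y 5 ^ 2 + γ y 6 ^ 2 = γ x 4 ^ 2 + γ x 5 ^ 2 + γ x 6 ^ 2 := by
  refine const_on (f := fun t => γ t 4 ^ 2 + γ t 5 ^ 2 + γ t 6 ^ 2) hs (fun t ht => ?_) hx hy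
  obtain ⟨-, hd⟩ := hγ t ht
  have := (((hd 4).fun_pow 2).fun_add ((hd 5).fun_pow 2)).fun_add ((hd 6).fun_pow 2)
  refine this.congr_deriv ?_
  simp only [RVF, Matrix.cons_val]
  push_cast
  ring

lemma energy_const {g : ℝ} {s : Set ℝ} (hs : s.OrdConnected) {γ : ℝ → Fin 10 → ℝ}
    (hγ : IsSolution g γ s) {x y : ℝ} (hx : x ∈ s) (hy : y ∈ s) :
    Hred g (γ y) = Hred g (γ x) := by
  refine const_on (f := fun t => Hred g (γ t)) hs (fun t ht => ?_) hx hy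
  obtain ⟨hm, hd⟩ := hγ t ht
  have h1 : HasDerivAt γ (RVF g (γ t)) t := hasDerivAt_pi.mpr hd
  have h2 := (Hred_diff g (γ t) (memB_facts hm)).hasFDerivAt.comp_hasDerivAt t h1
  refine h2.congr_deriv ?_
  have e : RVF g (γ t) = ∑ i, RVF g (γ t) i • (Pi.single i 1 : Fin 10 → ℝ) := by
    ext j; simp [Finset.sum_apply, Pi.single_apply]
  rw [e, map_sum]
  simp only [map_smul, smul_eq_mul]
  change ∑ i, RVF g (γ t) i * pd g i (γ t) = 0
  simp only [Fin.sum_univ_ofNat, RVF, Matrix.cons_val]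
  ring

lemma zero_of_sq {a b c : ℝ} (h : a ^ 2 + b ^ 2 + c ^ 2 = 0) : a = 0 ∧ b = 0 ∧ c = 0 := by
  refine ⟨?_, ?_, ?_⟩ <;> nlinarith [sq_nonneg a, sq_nonneg b, sq_nonneg c]

lemma pd_zero {g b1 b2 b3 : ℝ} (hg : 0 < g) (hB : memB b1 b2) (hb3 : b3 = (b1 * b2)⁻¹)
    (heq : GSp g b1 b2 b3 = GSm g b1 b2 b3) (hpos : 0 < GSp g b1 b2 b3) (Ps : Fin 10 → ℝ)
    (hPs : Ps = ![b1, b2, 0, 0, 0, Real.sqrt (GSp g b1 b2 b3), 0, 0, 0, 0]) (i : Fin 10)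
    (h5 : (5 : Fin 10) ≠ i) (h7 : (7 : Fin 10) ≠ i) (h8 : (8 : Fin 10) ≠ i) (h9 : (9 : Fin 10) ≠ i) : pd g i Ps = 0 := by
  have hD : Dm Ps := by rw [hPs]; exact memB_facts hB
  have hl : HasDerivAt (fun t : ℝ => Ps + t • (Pi.single i 1 : Fin 10 → ℝ)) (Pi.single i 1) 0 := by
    simpa using ((hasDerivAt_id (0:ℝ)).smul_const (Pi.single i 1 : Fin 10 → ℝ)).const_add Ps
  have hd : HasDerivAt (fun t : ℝ => Hred g (Ps + t • (Pi.single i 1 : Fin 10 → ℝ))) (pd g i Ps) 0 := by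
    refine HasFDerivAt.comp_hasDerivAt (l := Hred g) (l' := fderiv ℝ (Hred g) Ps) 0 ?_ hl
    simpa using (Hred_diff g Ps hD).hasFDerivAt
  refine IsLocalMin.hasDerivAt_eq_zero ?_ hd
  have hc : Filter.Tendsto (fun t : ℝ => Ps + t • (Pi.single i 1 : Fin 10 → ℝ)) (nhds 0) (nhds Ps) := by
    simpa [ContinuousAt] using hl.continuousAt
  filter_upwards [hc.eventually (local_min hg hB hb3 heq hpos Ps hPs)] with t ht
  obtain ⟨-, ht⟩ := ht
  have e5 : Ps 5 = Real.sqrt (GSp g b1 b2 b3) := by rw [hPs]; rfl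
  have e7 : Ps 7 = 0 := by rw [hPs]; rfl
  have e8 : Ps 8 = 0 := by rw [hPs]; rfl
  have e9 : Ps 9 = 0 := by rw [hPs]; rfl
  simp only [zero_smul, add_zero]
  refine (ht ?_ ?_ ?_ ?_).1
  · simp [Pi.single_apply, h7, e7]
  · simp [Pi.single_apply, h8, e8]
  · simp [Pi.single_apply, h9, e9]
  · have : (Ps + t • (Pi.single i 1 : Fin 10 → ℝ)) 5 ^ 2 = GSp g b1 b2 b3 := by
      simp [Pi.single_apply, h5, e5, Real.sq_sqrt hpos.le]
    rw [this]; nlinarith [sq_nonneg ((Ps + t • (Pi.single i 1 : Fin 10 → ℝ)) 4),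
      sq_nonneg ((Ps + t • (Pi.single i 1 : Fin 10 → ℝ)) 6)]

lemma stable {g b1 b2 b3 : ℝ} (hg : 0 < g) (hB : memB b1 b2) (hb3 : b3 = (b1 * b2)⁻¹)
    (heq : GSp g b1 b2 b3 = GSm g b1 b2 b3) (hpos : 0 < GSp g b1 b2 b3) (Ps : Fin 10 → ℝ)
    (hPs : Ps = ![b1, b2, 0, 0, 0, Real.sqrt (GSp g b1 b2 b3), 0, 0, 0, 0]) (ε : ℝ) (hε : 0 < ε) :
    ∃ δ > 0, ∀ (T : ℝ) (γ : ℝ → Fin 10 → ℝ),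
      IsSolution g γ (Set.Ico 0 T) →
      Real.sqrt ((γ 0 4) ^ 2 + (γ 0 5) ^ 2 + (γ 0 6) ^ 2) = Real.sqrt (GSp g b1 b2 b3) →
      (γ 0 7 = 0 ∧ γ 0 8 = 0 ∧ γ 0 9 = 0) →
      dist (γ 0) Ps < δ → ∀ t ∈ Set.Ico (0:ℝ) T, dist (γ t) Ps < ε := by
  have hD : Dm Ps := by rw [hPs]; exact memB_facts hB
  obtain ⟨r, hr, hball⟩ := Metric.eventually_nhds_iff_ball.mp (local_min hg hB hb3 heq hpos Ps hPs)
  set G := GSp g b1 b2 b3 with hG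
  have hN : 0 < Real.sqrt G := Real.sqrt_pos.mpr hpos
  obtain ⟨ρ, hρ, hρε, hρr, hρN⟩ : ∃ ρ > 0, ρ ≤ ε ∧ ρ < r ∧ ρ ≤ Real.sqrt G :=
    ⟨min ε (min (r / 2) (Real.sqrt G)), by positivity, min_le_left _ _,
      by linarith [min_le_right ε (min (r / 2) (Real.sqrt G)), min_le_left (r / 2) (Real.sqrt G)],
      (min_le_right _ _).trans (min_le_right _ _)⟩
  let K : Set (Fin 10 → ℝ) := Metric.sphere Ps ρ ∩
    {P | P 7 = 0 ∧ P 8 = 0 ∧ P 9 = 0 ∧ P 4 ^ 2 + P 5 ^ 2 + P 6 ^ 2 = G}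
  have hKc : IsCompact K := by
    refine (isCompact_sphere Ps ρ).inter_right ?_
    refine (isClosed_eq (continuous_apply 7) continuous_const).inter
      ((isClosed_eq (continuous_apply 8) continuous_const).inter
      ((isClosed_eq (continuous_apply 9) continuous_const).inter
      (isClosed_eq (by fun_prop) continuous_const)))
  have hKb : ∀ P ∈ K, P ∈ Metric.ball Ps r := by
    intro P hP
    rw [Metric.mem_ball, Metric.mem_sphere.mp hP.1]; exact hρr
  have hlt : ∀ P ∈ K, Hred g Ps < Hred g P := by
    intro P hP
    by_contra hc
    push Not at hc
    obtain ⟨hs, k7, k8, k9, k⟩ := id hP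
    obtain ⟨r0, r1, r2, r3, r4, r6⟩ := ((hball P (hKb P hP)).2 k7 k8 k9 k.ge).2 hc
    have e5 : Ps 5 = Real.sqrt G := by rw [hPs]; rfl
    have d5 : |P 5 - Real.sqrt G| ≤ ρ := by
      have := dist_le_pi_dist P Ps 5
      rw [Metric.mem_sphere.mp hs, Real.dist_eq, e5] at this
      exact this
    rw [r4, r6] at k
    have hsq : P 5 ^ 2 = Real.sqrt G ^ 2 := by rw [Real.sq_sqrt hpos.le]; linarith
    have h5 : P 5 = Real.sqrt G := by
      rcases sq_eq_sq_iff_eq_or_eq_neg.mp hsq with h | h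
      · exact h
      · rw [abs_le] at d5; linarith [d5.1]
    have : P = Ps := by
      rw [hPs]; ext i; fin_cases i <;> simp [r0, r1, r2, r3, r4, r6, k7, k8, k9, h5]
    have hs' := Metric.mem_sphere.mp hs
    rw [this, dist_self] at hs'
    linarith
  obtain ⟨m, hm, hmK⟩ : ∃ m, Hred g Ps < m ∧ ∀ P ∈ K, m ≤ Hred g P := by
    rcases K.eq_empty_or_nonempty with he | hne
    · exact ⟨Hred g Ps + 1, by linarith, by simp [he]⟩
    · have hcont : ContinuousOn (Hred g) K := fun P hP =>
        (Hred_diff g P (hball P (hKb P hP)).1).continuousAt.continuousWithinAt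
      obtain ⟨P, hP, hPm⟩ := hKc.exists_isMinOn hne hcont
      exact ⟨Hred g P, hlt P hP, fun Q hQ => hPm hQ⟩
  obtain ⟨δ, hδ, hδb⟩ := Metric.eventually_nhds_iff_ball.mp
    ((Hred_diff g Ps hD).continuousAt.eventually (gt_mem_nhds hm))
  refine ⟨min δ ρ, by positivity, fun T γ hγ h4 h7 hd t ht => ?_⟩
  by_contra hc
  push Not at hc
  have h0 : (0:ℝ) ∈ Set.Ico 0 T := ⟨le_rfl, ht.1.trans_lt ht.2⟩
  have hcont : ContinuousOn (fun τ => dist (γ τ) Ps) (Set.Icc 0 t) := by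
    intro τ hτ
    have h1 : HasDerivAt γ (RVF g (γ τ)) τ :=
      hasDerivAt_pi.mpr (hγ τ ⟨hτ.1, hτ.2.trans_lt ht.2⟩).2
    exact ContinuousAt.continuousWithinAt (Filter.Tendsto.dist h1.continuousAt tendsto_const_nhds)
  obtain ⟨τ, hτ, hτρ⟩ := intermediate_value_Icc ht.1 hcont
    (show ρ ∈ Set.Icc (dist (γ 0) Ps) (dist (γ t) Ps) from
      ⟨(hd.trans_le (min_le_right _ _)).le, hρε.trans hc⟩)
  have hτs : τ ∈ Set.Ico 0 T := ⟨hτ.1, hτ.2.trans_lt ht.2⟩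
  have hR := right_const Set.ordConnected_Ico hγ h0 hτs
  have hL := left_const Set.ordConnected_Ico hγ h0 hτs
  have hE := energy_const Set.ordConnected_Ico hγ h0 hτs
  obtain ⟨z7, z8, z9⟩ := zero_of_sq (hR.trans (by rw [h7.1, h7.2.1, h7.2.2]; norm_num))
  rw [Real.sqrt_inj (by positivity) hpos.le] at h4
  have hK : γ τ ∈ K := ⟨hτρ, z7, z8, z9, hL.trans h4⟩
  have := hmK _ hK
  have := hδb (γ 0) (Metric.mem_ball.mpr (hd.trans_le (min_le_left _ _)))
  linarith

/-- In the irrotational `S₂` regime (`G^S₊ = G^S₋ > 0`), with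
`N = √(G^S₊(b₁,b₂,b₃))`, the point `p* = (b₁,b₂,0,0, 0,N,0, 0,0,0)` is an equilibrium of
the reduced equations, the set `{η_r = 0}` is invariant under the reduced flow, and `p*` is
Liapunov stable relative to `{(b,c,η_l,η_r) : ‖η_l‖ = N, η_r = 0}`. -/
theorem stmt_8 (g b1 b2 b3 : ℝ) (hg : 0 < g) (hB : memB b1 b2) (hb3 : b3 = (b1 * b2)⁻¹)
    (heq : GSp g b1 b2 b3 = GSm g b1 b2 b3) (hpos : 0 < GSp g b1 b2 b3) :
    RVF g ![b1, b2, 0, 0, 0, Real.sqrt (GSp g b1 b2 b3), 0, 0, 0, 0] = 0 ∧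
    (∀ (s : Set ℝ), s.OrdConnected → ∀ γ : ℝ → Fin 10 → ℝ, IsSolution g γ s →
      (∃ t₀ ∈ s, γ t₀ 7 = 0 ∧ γ t₀ 8 = 0 ∧ γ t₀ 9 = 0) →
      ∀ t ∈ s, γ t 7 = 0 ∧ γ t 8 = 0 ∧ γ t 9 = 0) ∧
    (∀ ε > 0, ∃ δ > 0, ∀ (T : ℝ) (γ : ℝ → Fin 10 → ℝ),
      IsSolution g γ (Set.Ico 0 T) →
      Real.sqrt ((γ 0 4) ^ 2 + (γ 0 5) ^ 2 + (γ 0 6) ^ 2) = Real.sqrt (GSp g b1 b2 b3) →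
      (γ 0 7 = 0 ∧ γ 0 8 = 0 ∧ γ 0 9 = 0) →
      dist (γ 0) ![b1, b2, 0, 0, 0, Real.sqrt (GSp g b1 b2 b3), 0, 0, 0, 0] < δ →
      ∀ t ∈ Set.Ico (0:ℝ) T,
        dist (γ t) ![b1, b2, 0, 0, 0, Real.sqrt (GSp g b1 b2 b3), 0, 0, 0, 0] < ε) := by
  refine ⟨?_, ?_, fun ε hε => stable hg hB hb3 heq hpos _ rfl ε hε⟩
  · have hz := pd_zero hg hB hb3 heq hpos _ rfl
    have z0 := hz 0 (by decide) (by decide) (by decide) (by decide)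
    have z1 := hz 1 (by decide) (by decide) (by decide) (by decide)
    have z2 := hz 2 (by decide) (by decide) (by decide) (by decide)
    have z3 := hz 3 (by decide) (by decide) (by decide) (by decide)
    have z4 := hz 4 (by decide) (by decide) (by decide) (by decide)
    have z6 := hz 6 (by decide) (by decide) (by decide) (by decide)
    ext i
    unfold RVF
    rw [z0, z1, z2, z3, z4, z6]
    fin_cases i <;> simp
  · rintro s hs γ hγ ⟨t₀, ht₀, h7, h8, h9⟩ t ht
    have hR := right_const hs hγ ht₀ ht
    exact zero_of_sq (hR.trans (by rw [h7, h8, h9]; norm_num))
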